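/- Let C_ℓ denote the cycle with ℓ edges, where ℓ ≥ 3. For every function N : ℕ → ℕ with n^{1+1/ℓ} = o(N(n)) and N(n) ≤ n(n−1)/2 for all n, and for every sequence of online Painter strategies with 2 colors (one for each board size n), the probability that the board G_{N(n)} of the online C_ℓ-avoidance game with 2 colors on n vertices contains a monochromatic copy of C_ℓ tends to 1 as n → ∞. -/

import Mathlib

open SimpleGraph Filter Asymptotics
open scoped Classical

/-- A history of the game: the sequence of edges presented so far, together with
the colors (elements of `Fin r`, representing the colors `1,…,r`) they received. -/
abbrev EdgeHistory (V : Type) (r : ℕ) := List (Sym2 V × Fin r)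

/-- A Painter strategy on vertex type `V` with `r` colors: a function assigning a color
to every pair (history, new edge). -/
abbrev PainterStrategy (V : Type) (r : ℕ) := EdgeHistory V r → Sym2 V → Fin r

/-- Auxiliary function: run a Painter strategy on a list of presented edges,
extending the given history. -/
def runPainterAux {V : Type} {r : ℕ} (π : PainterStrategy V r) :
    EdgeHistory V r → List (Sym2 V) → EdgeHistory V r
  | h, [] => h
  | h, e :: es => runPainterAux π (h ++ [(e, π h e)]) es

/-- The colored history obtained by coloring the edges of `l` successively
according to the Painter strategy `π`. -/
def runPainter {V : Type} {r : ℕ} (π : PainterStrategy V r) (l : List (Sym2 V)) :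
    EdgeHistory V r :=
  runPainterAux π [] l

/-- `G` contains a copy of `F`, i.e. a subgraph isomorphic to `F`. -/
def IsCopy {α β : Type} (F : SimpleGraph α) (G : SimpleGraph β) : Prop :=
  ∃ f : α ↪ β, ∀ u v : α, F.Adj u v → G.Adj (f u) (f v)

/-- The graph formed by the edges of color `c` in the history `h`. -/
def colorGraph {V : Type} {r : ℕ} (h : EdgeHistory V r) (c : Fin r) : SimpleGraph V :=
  SimpleGraph.fromEdgeSet {e | (e, c) ∈ h}

/-- The history `h` contains a monochromatic copy of `F`. -/
def HasMonoCopy {α V : Type} {r : ℕ} (F : SimpleGraph α) (h : EdgeHistory V r) : Prop :=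
  ∃ c : Fin r, IsCopy F (colorGraph h c)

/-- The number of edges of `G` lying entirely within the vertex set `S`. -/
noncomputable def edgesWithin {V : Type} (G : SimpleGraph V) (S : Set V) : ℕ :=
  (G.edgeSet ∩ {e | ∀ v ∈ e, v ∈ S}).ncard

/-- `m(G) ≤ d`: every subgraph `H` of `G` with at least one vertex satisfies `e_H ≤ d · v_H`. -/
def DensityLE {V : Type} (G : SimpleGraph V) (d : ℝ) : Prop :=
  ∀ S : Finset V, S.Nonempty → (edgesWithin G (↑S : Set V) : ℝ) ≤ d * (S.card : ℝ)

/-- `G` contains no cycle and every connected component of `G` has at most `k` edges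
(equivalently, `G` is acyclic and contains no connected subgraph with more than `k` edges). -/
def TreeSizeLE {V : Type} (G : SimpleGraph V) (k : ℕ) : Prop :=
  G.IsAcyclic ∧ ∀ S : Set V, (G.induce S).Connected → edgesWithin G S ≤ k

/-- A legal sequence of moves for Builder: distinct non-loop edges. -/
def ValidEdgeSeq {V : Type} (l : List (Sym2 V)) : Prop :=
  l.Nodup ∧ ∀ e ∈ l, ¬ e.IsDiag

/-- The (uncolored) board formed by a list of edges. -/
def boardOf {V : Type} (l : List (Sym2 V)) : SimpleGraph V :=
  SimpleGraph.fromEdgeSet {e | e ∈ l}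

/-- Builder has a winning strategy in the deterministic `F`-avoidance game with `r` colors
and density restriction `d`. -/
def BuilderWinsDensity {α : Type} (F : SimpleGraph α) (r : ℕ) (d : ℝ) : Prop :=
  ∃ a : ℕ, ∀ π : PainterStrategy (Fin a) r, ∃ l : List (Sym2 (Fin a)),
    ValidEdgeSeq l ∧ (∀ i : ℕ, DensityLE (boardOf (l.take i)) d) ∧
    HasMonoCopy F (runPainter π l)

/-- Builder has a winning strategy in the deterministic `F`-avoidance game with `r` colors
and tree size restriction `k`. -/
def BuilderWinsTree {α : Type} (F : SimpleGraph α) (r k : ℕ) : Prop :=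
  ∃ a : ℕ, ∀ π : PainterStrategy (Fin a) r, ∃ l : List (Sym2 (Fin a)),
    ValidEdgeSeq l ∧ (∀ i : ℕ, TreeSizeLE (boardOf (l.take i)) k) ∧
    HasMonoCopy F (runPainter π l)

/-- The Painter strategy `π` on `a` vertices never creates a monochromatic copy of `F`
against any Builder play obeying the tree size restriction `k`. -/
def PainterAvoidsTree {α : Type} (F : SimpleGraph α) (r k a : ℕ)
    (π : PainterStrategy (Fin a) r) : Prop :=
  ∀ l : List (Sym2 (Fin a)), ValidEdgeSeq l →
    (∀ i : ℕ, TreeSizeLE (boardOf (l.take i)) k) →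
    ¬ HasMonoCopy F (runPainter π l)

/-- Painter has a winning strategy in the deterministic `F`-avoidance game with `r` colors
and tree size restriction `k`. -/
def PainterWinsTree {α : Type} (F : SimpleGraph α) (r k : ℕ) : Prop :=
  ∀ a : ℕ, ∃ π : PainterStrategy (Fin a) r, PainterAvoidsTree F r k a π

/-- A sequence of `N` distinct non-loop edges on `n` vertices. -/
def ValidSeqFun {n N : ℕ} (f : Fin N → Sym2 (Fin n)) : Prop :=
  Function.Injective f ∧ ∀ i, ¬ (f i).IsDiag

/-- The probability (with respect to the uniformly random order in which the `N` distinct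
edges of the random process on `n` vertices appear) of the event `P`. -/
noncomputable def onlineProb (n N : ℕ) (P : (Fin N → Sym2 (Fin n)) → Prop) : ℝ :=
  (Set.ncard {f : Fin N → Sym2 (Fin n) | ValidSeqFun f ∧ P f} : ℝ) /
  (Set.ncard {f : Fin N → Sym2 (Fin n) | ValidSeqFun f} : ℝ)

/-- Event: playing the online strategy `π` on the random edge sequence `f` produces
a monochromatic copy of `F`. -/
def OnlineMonoCopy {α : Type} (F : SimpleGraph α) {r n N : ℕ}
    (π : PainterStrategy (Fin n) r) (f : Fin N → Sym2 (Fin n)) : Prop :=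
  HasMonoCopy F (runPainter π (List.ofFn f))


section Generic

/-- average -/
noncomputable def av {Ω : Type*} [Fintype Ω] (f : Ω → ℝ) : ℝ := (∑ w, f w) / Fintype.card Ω

/-- indicator -/
noncomputable def ind (p : Prop) : ℝ := if p then 1 else 0

lemma ind_nonneg (p : Prop) : 0 ≤ ind p := by unfold ind; split_ifs <;> norm_num
lemma ind_le_one (p : Prop) : ind p ≤ 1 := by unfold ind; split_ifs <;> norm_num
lemma ind_mono {p q : Prop} (h : p → q) : ind p ≤ ind q := by
  unfold ind; split_ifs with h1 h2
  · norm_num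
  · exact absurd (h h1) h2
  · norm_num
  · norm_num
lemma ind_true {p : Prop} (h : p) : ind p = 1 := by simp [ind, h]
lemma ind_false {p : Prop} (h : ¬ p) : ind p = 0 := by simp [ind, h]

lemma sum_ind {Ω : Type*} (s : Finset Ω) (P : Ω → Prop) [DecidablePred P] :
    ∑ w ∈ s, ind (P w) = ((s.filter P).card : ℝ) := by
  rw [Finset.card_filter]; push_cast
  apply Finset.sum_congr rfl
  intro w _
  by_cases h : P w <;> simp [ind, h]

lemma av_mono {Ω : Type*} [Fintype Ω] {f g : Ω → ℝ} (h : ∀ w, f w ≤ g w) : av f ≤ av g := by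
  unfold av; gcongr with w; exact h w

lemma av_add {Ω : Type*} [Fintype Ω] (f g : Ω → ℝ) : av (fun w => f w + g w) = av f + av g := by
  unfold av; rw [Finset.sum_add_distrib, add_div]

lemma av_sub {Ω : Type*} [Fintype Ω] (f g : Ω → ℝ) : av (fun w => f w - g w) = av f - av g := by
  unfold av; rw [Finset.sum_sub_distrib, sub_div]

lemma av_mul_left {Ω : Type*} [Fintype Ω] (c : ℝ) (f : Ω → ℝ) : av (fun w => c * f w) = c * av f := by
  unfold av; rw [← Finset.mul_sum, mul_div_assoc]

lemma av_const {Ω : Type*} [Fintype Ω] [Nonempty Ω] (c : ℝ) : av (fun _ : Ω => c) = c := by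
  unfold av; simp

lemma av_sum {Ω : Type*} [Fintype Ω] {ι : Type*} (s : Finset ι) (f : ι → Ω → ℝ) :
    av (fun w => ∑ i ∈ s, f i w) = ∑ i ∈ s, av (f i) := by
  unfold av; rw [Finset.sum_comm, Finset.sum_div]

lemma av_nonneg {Ω : Type*} [Fintype Ω] {f : Ω → ℝ} (h : ∀ w, 0 ≤ f w) : 0 ≤ av f := by
  unfold av; exact div_nonneg (Finset.sum_nonneg fun w _ => h w) (by positivity)

lemma av_prod {Ω Ω' : Type*} [Fintype Ω] [Fintype Ω'] (f : Ω × Ω' → ℝ) :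
    av f = av (fun a => av (fun b => f (a, b))) := by
  unfold av
  rw [Fintype.sum_prod_type, Fintype.card_prod, ← Finset.sum_div, div_div]
  push_cast
  rw [mul_comm]

lemma av_equiv {Ω Ω' : Type*} [Fintype Ω] [Fintype Ω'] (e : Ω ≃ Ω') (f : Ω' → ℝ) :
    av (fun w => f (e w)) = av f := by
  unfold av
  rw [Fintype.card_congr e, e.sum_comp f]

lemma av_pi {ι : Type*} [Fintype ι] [DecidableEq ι] {Ω : Type*} [Fintype Ω] (f : ι → Ω → ℝ) :
    av (fun g : ι → Ω => ∏ j, f j (g j)) = ∏ j, av (f j) := by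
  unfold av
  rw [Finset.prod_div_distrib, Finset.prod_univ_sum, Fintype.piFinset_univ]
  simp

/-- Chebyshev -/
lemma cheb {Ω : Type*} [Fintype Ω] [Nonempty Ω] (X : Ω → ℝ) (μ v : ℝ) (hμ : 0 < μ)
    (h1 : av X = μ) (h2 : av (fun w => X w * X w) ≤ μ ^ 2 + v) :
    av (fun w => ind (X w < μ / 2)) ≤ 4 * v / μ ^ 2 := by
  have : ∀ w, ind (X w < μ / 2) ≤ 4 / μ ^ 2 * (X w * X w - 2 * μ * X w + μ ^ 2) := by
    intro w
    by_cases h : X w < μ / 2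
    · rw [ind_true h, div_mul_eq_mul_div, le_div_iff₀ (by positivity)]
      nlinarith
    · rw [ind_false h]
      have : X w * X w - 2 * μ * X w + μ ^ 2 = (X w - μ) ^ 2 := by ring
      rw [this]; positivity
  refine (av_mono this).trans ?_
  rw [av_mul_left, av_add, av_sub, av_mul_left, av_const, h1, div_mul_eq_mul_div]
  gcongr
  nlinarith

lemma markov {Ω : Type*} [Fintype Ω] (X : Ω → ℝ) (hX : ∀ w, 0 ≤ X w) (b : ℝ) (hb : 0 < b) :
    av (fun w => ind (b < X w)) ≤ av X / b := by
  rw [div_eq_inv_mul, ← av_mul_left]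
  apply av_mono
  intro w
  by_cases h : b < X w
  · rw [ind_true h, inv_mul_eq_div, le_div_iff₀ hb]; linarith
  · rw [ind_false h]; have := hX w; positivity

lemma sum_cons {E : Type*} [Fintype E] {k : ℕ} (F : (Fin (k+1) → E) → ℝ) :
    ∑ f, F f = ∑ e, ∑ f : Fin k → E, F (Fin.cons e f) := by
  rw [← (Fin.consEquiv (fun _ : Fin (k+1) => E)).sum_comp F, Fintype.sum_prod_type]
  rfl

lemma av_cons {E : Type*} [Fintype E] {k : ℕ} (F : (Fin (k+1) → E) → ℝ) :
    av F = av (fun e => av (fun f : Fin k → E => F (Fin.cons e f))) := by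
  unfold av
  rw [sum_cons, ← Finset.sum_div, div_div]
  simp [pow_succ]

/-- number of maps with given image size -/
lemma sum_image (ι : Type) [Fintype ι] {n : ℕ} (hn : 0 < n) :
    ∑ y : ι → Fin n, ((n : ℝ) ^ (Finset.univ.image y).card)⁻¹
      ≤ (Fintype.card ι + 1) * (Fintype.card ι : ℝ) ^ Fintype.card ι := by
  set k := Fintype.card ι with hk
  have hmaps : ∀ y ∈ (Finset.univ : Finset (ι → Fin n)),
      (Finset.univ.image y).card ∈ Finset.range (k + 1) := by
    intro y _
    rw [Finset.mem_range]
    have := Finset.card_image_le (s := (Finset.univ : Finset ι)) (f := y)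
    rw [Finset.card_univ] at this; omega
  rw [← Finset.sum_fiberwise_of_maps_to hmaps]
  have key : ∀ v ∈ Finset.range (k+1), ∑ y : ι → Fin n with (Finset.univ.image y).card = v,
      ((n : ℝ) ^ (Finset.univ.image y).card)⁻¹ ≤ (k : ℝ) ^ k := by
    intro v hv
    rw [Finset.mem_range] at hv
    have h1 : ∑ y : ι → Fin n with (Finset.univ.image y).card = v,
      ((n : ℝ) ^ (Finset.univ.image y).card)⁻¹ =
       ({y : ι → Fin n | (Finset.univ.image y).card = v} : Finset _).card * ((n : ℝ) ^ v)⁻¹ := by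
      rw [Finset.sum_congr rfl (g := fun _ => ((n : ℝ) ^ v)⁻¹)]
      · simp
      · intro y hy; rw [(Finset.mem_filter.1 hy).2]
    rw [h1]
    have h2 : ({y : ι → Fin n | (Finset.univ.image y).card = v} : Finset _) ⊆
        (Finset.powersetCard v (Finset.univ : Finset (Fin n))).biUnion
          (fun s => Fintype.piFinset (fun _ => s)) := by
      intro y hy
      have hy := (Finset.mem_filter.1 hy).2
      rw [Finset.mem_biUnion]
      refine ⟨Finset.univ.image y, by simp [Finset.mem_powersetCard, hy], ?_⟩
      rw [Fintype.mem_piFinset]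
      intro a; exact Finset.mem_image_of_mem _ (Finset.mem_univ _)
    have h3 : ({y : ι → Fin n | (Finset.univ.image y).card = v} : Finset _).card ≤ n ^ v * k ^ k := by
      refine (Finset.card_le_card h2).trans ?_
      refine Finset.card_biUnion_le.trans ?_
      have : ∀ s ∈ Finset.powersetCard v (Finset.univ : Finset (Fin n)),
          (Fintype.piFinset (fun _ : ι => s)).card ≤ k ^ k := by
        intro s hs
        rw [Fintype.card_piFinset]
        simp only [Finset.prod_const, Finset.card_univ, (Finset.mem_powersetCard.1 hs).2, ← hk]
        exact Nat.pow_le_pow_left (by omega) _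
      refine (Finset.sum_le_card_nsmul _ _ _ this).trans ?_
      rw [Finset.card_powersetCard, smul_eq_mul, Finset.card_univ, Fintype.card_fin]
      exact Nat.mul_le_mul_right _ (Nat.choose_le_pow _ _)
    have h4 : (({y : ι → Fin n | (Finset.univ.image y).card = v} : Finset _).card : ℝ) ≤ (n:ℝ) ^ v * (k:ℝ) ^ k := by
      exact_mod_cast h3
    have hn' : (0:ℝ) < (n:ℝ)^v := by positivity
    rw [mul_inv_le_iff₀ hn']
    linarith
  refine (Finset.sum_le_card_nsmul _ _ _ key).trans ?_
  simp

end Generic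


section Cover

lemma pow_add_le' (x y : ℝ) (hx : 0 ≤ x) (hy : 0 ≤ y) (t : ℕ) :
    x ^ (t + 1) + (t + 1) * x ^ t * y ≤ (x + y) ^ (t + 1) := by
  induction t with
  | zero => simp
  | succ t ih =>
    have h1 : (x + y) ^ (t + 1 + 1) = (x + y) ^ (t + 1) * (x + y) := pow_succ _ _
    have h2 := mul_le_mul_of_nonneg_right ih (add_nonneg hx hy)
    rw [h1]
    refine le_trans ?_ h2
    push_cast
    have : 0 ≤ (t + 1) * x ^ t * y * y := by positivity
    have e1 : x ^ (t + 1 + 1) = x ^ t * x * x := by ring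
    have e2 : x ^ (t + 1) = x ^ t * x := by ring
    rw [e1, e2]
    nlinarith

lemma cover_le {E S : Type} [Fintype E] [Nonempty E] (φ : E → S) (hφ : Function.Injective φ)
    (K : ℕ) : ∀ T : Finset S,
    av (fun g : Fin K → E => ind (∀ e ∈ T, ∃ i, φ (g i) = e)) ≤
      ((K : ℝ) / Fintype.card E) ^ T.card := by
  induction K with
  | zero =>
    intro T
    by_cases hT : T = ∅
    · subst hT
      simp only [Finset.card_empty, pow_zero]
      rw [← av_const (Ω := Fin 0 → E) 1]
      exact av_mono fun _ => ind_le_one _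
    · obtain ⟨t, ht⟩ := Finset.nonempty_iff_ne_empty.2 hT
      have : (fun g : Fin 0 → E => ind (∀ e ∈ T, ∃ i, φ (g i) = e)) = fun _ => 0 := by
        funext g
        apply ind_false
        intro h
        obtain ⟨i, _⟩ := h t ht
        exact i.elim0
      rw [this, av_const]
      positivity
  | succ K ih =>
    intro T
    set M : ℝ := (Fintype.card E : ℝ) with hM
    have hM0 : 0 < M := by rw [hM]; exact_mod_cast Fintype.card_pos
    rcases Nat.eq_zero_or_pos T.card with h0 | hpos
    · rw [h0, pow_zero, ← av_const (Ω := Fin (K+1) → E) 1]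
      exact av_mono fun _ => ind_le_one _
    obtain ⟨t, ht⟩ : ∃ t, T.card = t + 1 := ⟨T.card - 1, by omega⟩
    rw [av_cons]
    have step : ∀ e : E, av (fun f : Fin K → E =>
        ind (∀ s ∈ T, ∃ i, φ ((Fin.cons e f : Fin (K+1) → E) i) = s)) ≤
        (K / M) ^ (t+1) + (K / M) ^ t * ind (φ e ∈ T) := by
      intro e
      have h1 : av (fun f : Fin K → E =>
        ind (∀ s ∈ T, ∃ i, φ ((Fin.cons e f : Fin (K+1) → E) i) = s)) ≤
          (K / M) ^ (T.erase (φ e)).card := by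
        refine le_trans (av_mono ?_) (ih (T.erase (φ e)))
        intro f
        apply ind_mono
        intro h s hs
        rw [Finset.mem_erase] at hs
        obtain ⟨i, hi⟩ := h s hs.2
        rcases Fin.eq_zero_or_eq_succ i with rfl | ⟨j, rfl⟩
        · simp at hi; exact absurd hi.symm hs.1
        · exact ⟨j, by simpa using hi⟩
      refine h1.trans ?_
      by_cases he : φ e ∈ T
      · rw [Finset.card_erase_of_mem he, ht, ind_true he]
        simp only [Nat.add_sub_cancel, mul_one]
        have : 0 ≤ (K / M) ^ (t+1) := by positivity
        linarith
      · rw [Finset.erase_eq_of_notMem he, ht, ind_false he]; simp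
    refine (av_mono step).trans ?_
    rw [av_add, av_const, av_mul_left]
    have h2 : av (fun e => ind (φ e ∈ T)) ≤ (t + 1) / M := by
      unfold av
      gcongr
      have : ∑ e, ind (φ e ∈ T) = ((Finset.univ.filter (fun e => φ e ∈ T)).card : ℝ) := sum_ind _ _
      rw [this]
      have h3 : (Finset.univ.filter (fun e => φ e ∈ T)).card ≤ T.card :=
        Finset.card_le_card_of_injOn φ (by intro e he; simpa using he) hφ.injOn
      rw [ht] at h3
      exact_mod_cast h3
    have h4 := pow_add_le' (K / M) (1 / M) (by positivity) (by positivity) t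
    rw [ht]
    push_cast
    rw [add_div]
    refine le_trans ?_ h4
    have : (K / M) ^ t * av (fun e => ind (φ e ∈ T)) ≤ (K / M) ^ t * ((t + 1) / M) := by
      gcongr
    calc _ ≤ (K / M) ^ (t+1) + (K / M) ^ t * ((t + 1) / M) := by linarith
      _ = _ := by ring

/-- probability that a given item is covered -/
noncomputable def qq (M K : ℕ) : ℝ := 1 - (1 - 1 / (M : ℝ)) ^ K

lemma av_avoid {E : Type} [Fintype E] (K : ℕ) (s : Finset E) :
    av (fun g : Fin K → E => ind (∀ i, g i ∈ s)) = ((s.card : ℝ) / Fintype.card E) ^ K := by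
  have : (fun g : Fin K → E => ind (∀ i, g i ∈ s)) = fun g => ∏ i, ind (g i ∈ s) := by
    funext g
    by_cases h : ∀ i, g i ∈ s
    · rw [ind_true h, Finset.prod_eq_one]
      intro i _; exact ind_true (h i)
    · rw [ind_false h]
      push Not at h
      obtain ⟨i, hi⟩ := h
      exact (Finset.prod_eq_zero (Finset.mem_univ i) (ind_false hi)).symm
  rw [this, av_pi (fun _ e => ind (e ∈ s))]
  have h2 : ∑ w, ind (w ∈ s) = (s.card : ℝ) := by
    rw [sum_ind]
    congr 2
    ext w; simp
  simp [av, h2, div_pow]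

lemma cover_one {E : Type} [Fintype E] [Nonempty E] (K : ℕ) (e : E) :
    av (fun g : Fin K → E => ind (∃ i, g i = e)) = qq (Fintype.card E) K := by
  have : (fun g : Fin K → E => ind (∃ i, g i = e)) =
      fun g => 1 - ind (∀ i, g i ∈ Finset.univ.erase e) := by
    funext g
    by_cases h : ∃ i, g i = e
    · rw [ind_true h, ind_false]
      · norm_num
      · obtain ⟨i, hi⟩ := h
        intro h'; simpa [hi] using h' i
    · rw [ind_false h, ind_true]
      · norm_num
      · intro i; simp; intro hi; exact h ⟨i, hi⟩
  have hM : 0 < (Fintype.card E : ℝ) := by exact_mod_cast Fintype.card_pos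
  rw [this, av_sub, av_const, av_avoid, Finset.card_erase_of_mem (Finset.mem_univ e), qq,
    Finset.card_univ, Nat.cast_sub Fintype.card_pos]
  congr 2
  field_simp
  simp

lemma cover_two {E : Type} [Fintype E] [Nonempty E] (K : ℕ) {e e' : E} (hne : e ≠ e') :
    av (fun g : Fin K → E => ind (∃ i, g i = e) * ind (∃ i, g i = e')) ≤
      qq (Fintype.card E) K ^ 2 := by
  have : (fun g : Fin K → E => ind (∃ i, g i = e) * ind (∃ i, g i = e')) =
      fun g => (ind (∃ i, g i = e) + ind (∃ i, g i = e') - 1) +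
        ind (∀ i, g i ∈ (Finset.univ.erase e).erase e') := by
    funext g
    have hh : (∀ i, g i ∈ (Finset.univ.erase e).erase e') ↔ ¬ (∃ i, g i = e) ∧ ¬ (∃ i, g i = e') := by
      simp only [Finset.mem_erase, Finset.mem_univ, and_true, not_exists]
      constructor
      · intro h; exact ⟨fun i => (h i).2, fun i => (h i).1⟩
      · rintro ⟨h1, h2⟩ i; exact ⟨h2 i, h1 i⟩
    rw [hh]
    by_cases h1 : ∃ i, g i = e <;> by_cases h2 : ∃ i, g i = e' <;> simp [ind, h1, h2]
  have hM2 : 2 ≤ Fintype.card E := by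
    have := Fintype.one_lt_card_iff.2 ⟨e, e', hne⟩; omega
  have hM2' : (2:ℝ) ≤ (Fintype.card E : ℝ) := by exact_mod_cast hM2
  rw [this, av_add, av_sub, av_add, av_const, cover_one, cover_one, av_avoid,
    Finset.card_erase_of_mem (by simp [hne.symm]), Finset.card_erase_of_mem (Finset.mem_univ e),
    Finset.card_univ, Nat.sub_sub, Nat.cast_sub hM2, qq]
  set M : ℝ := (Fintype.card E : ℝ)
  have hM : 0 < M := by linarith
  have h1 : ((M - ((1 + 1 : ℕ) : ℝ)) / M) ^ K ≤ ((1 - 1 / M) ^ 2) ^ K := by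
    apply pow_le_pow_left₀
    · apply div_nonneg _ hM.le; push_cast; linarith
    · rw [div_le_iff₀ hM]
      have : (1 - 1 / M) ^ 2 * M = M - 2 + 1 / M := by field_simp; ring
      rw [this]
      have : 0 < 1 / M := by positivity
      push_cast; linarith
  have h2 : ((1 - 1 / M) ^ 2) ^ K = ((1 - 1/M) ^ K) ^ 2 := by rw [← pow_mul, ← pow_mul, mul_comm]
  rw [h2] at h1
  nlinarith

lemma qq_le {M K : ℕ} (hM : 0 < M) : qq M K ≤ (K : ℝ) / M := by
  have hM' : (1:ℝ) ≤ M := by exact_mod_cast hM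
  have h := one_add_mul_le_pow (a := -(1 / (M:ℝ))) (by
    have : 1 / (M:ℝ) ≤ 1 := by rw [div_le_one (by linarith)]; exact hM'
    linarith) K
  unfold qq
  have e : (K:ℝ) / M = K * (1 / M) := by ring
  rw [e]
  have : 1 + -(1 / (M:ℝ)) = 1 - 1 / M := by ring
  rw [this] at h
  linarith

lemma le_qq {M K : ℕ} (hM : 0 < M) (hK : K ≤ M) : (K : ℝ) / M / 2 ≤ qq M K := by
  have hM' : (1:ℝ) ≤ M := by exact_mod_cast hM
  have hM0 : (0:ℝ) < M := by linarith
  set p : ℝ := (K:ℝ) / M with hp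
  have hp0 : 0 ≤ p := by positivity
  have hp1 : p ≤ 1 := by rw [hp, div_le_one hM0]; exact_mod_cast hK
  have h := one_add_mul_le_pow (a := (1 / (M:ℝ))) (by
    have : 0 < 1 / (M:ℝ) := by positivity
    linarith) K
  have e : 1 + (K:ℝ) * (1 / M) = 1 + p := by rw [hp]; ring
  rw [e] at h
  have h1 : 1 / (M:ℝ) ≤ 1 := by rw [div_le_one hM0]; exact hM'
  have h0 : 0 < 1 / (M:ℝ) := by positivity
  have h2 : (1 - 1 / (M:ℝ)) ^ K * (1 + 1 / M) ^ K ≤ 1 := by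
    rw [← mul_pow]
    apply pow_le_one₀
    · apply mul_nonneg <;> linarith
    · nlinarith
  have h3 : 0 ≤ (1 - 1 / (M:ℝ)) ^ K := pow_nonneg (by linarith) _
  unfold qq
  set y := (1 - 1 / (M:ℝ)) ^ K
  have h4 : y * (1 + p) ≤ 1 := le_trans (by gcongr) h2
  nlinarith

lemma qq_nonneg {M K : ℕ} (hM : 0 < M) (hK : K ≤ M) : 0 ≤ qq M K :=
  le_trans (by positivity) (le_qq hM hK)

/-- number of distinct items -/
lemma distinct_low {E : Type} [Fintype E] [Nonempty E] (K : ℕ) (hK0 : 0 < K)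
    (hK : K ≤ Fintype.card E) :
    av (fun g : Fin K → E => ind (∑ e : E, ind (∃ i, g i = e) < (K : ℝ) / 4)) ≤ 8 / K := by
  set M := Fintype.card E with hM
  have hM0 : 0 < M := Fintype.card_pos
  have hMr : (0:ℝ) < M := by exact_mod_cast hM0
  have hKr : (0:ℝ) < K := by exact_mod_cast hK0
  have hq := le_qq hM0 hK
  set q := qq M K with hqd
  have hKM : (K:ℝ) / 2 ≤ M * q := by
    have : (M:ℝ) * ((K : ℝ) / M / 2) ≤ M * q := by gcongr
    have e : (M:ℝ) * ((K : ℝ) / M / 2) = K / 2 := by field_simp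
    linarith
  have hμ : 0 < (M:ℝ) * q := by linarith
  have h := cheb (fun g : Fin K → E => ∑ e : E, ind (∃ i, g i = e)) (M * q) (M * q) hμ ?_ ?_
  · refine le_trans (av_mono ?_) (h.trans ?_)
    · intro g
      apply ind_mono
      intro h; linarith
    · have e : 4 * (M * q) / (M * q) ^ 2 = 4 / (M * q) := by field_simp
      rw [e, div_le_div_iff₀ hμ hKr]; linarith
  · rw [av_sum]
    simp_rw [cover_one]
    simp [← hM, ← hqd]
  · simp_rw [Finset.sum_mul_sum]
    rw [av_sum]
    have : ∀ e ∈ (Finset.univ : Finset E), av (fun g : Fin K → E => ∑ e', ind (∃ i, g i = e) * ind (∃ i, g i = e')) ≤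
        q + M * q ^ 2 := by
      intro e _
      rw [av_sum]
      have : ∀ e' ∈ (Finset.univ : Finset E), av (fun g : Fin K → E => ind (∃ i, g i = e) * ind (∃ i, g i = e')) ≤
          (if e = e' then q else 0) + q ^ 2 := by
        intro e' _
        by_cases hne : e = e'
        · subst hne
          simp only [if_true]
          have h1 : av (fun g : Fin K → E => ind (∃ i, g i = e) * ind (∃ i, g i = e)) ≤ q := by
            rw [hqd, hM, ← cover_one K e]
            apply av_mono
            intro g
            have := ind_le_one (∃ i, g i = e)
            have := ind_nonneg (∃ i, g i = e)
            nlinarith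
          nlinarith [sq_nonneg q]
        · simp only [hne, if_false, zero_add]
          exact cover_two K hne
      refine (Finset.sum_le_sum this).trans ?_
      rw [Finset.sum_add_distrib]
      simp [← hM]
    refine (Finset.sum_le_sum this).trans ?_
    simp [← hM]
    nlinarith

/-- second round -/
lemma second_round {E X : Type} [Fintype E] [Nonempty E] (K ℓ : ℕ) (hK0 : 0 < K)
    (hK : K ≤ Fintype.card E) (ε : X → Fin ℓ → E) (C : Finset X) (hC : C.Nonempty) :
    av (fun g : Fin ℓ → Fin K → E => ind (∀ x ∈ C, ∃ j, ∀ i, g j i ≠ ε x j)) ≤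
      4 * (∑ x ∈ C, ∑ x' ∈ C, ind (∃ j, ε x j = ε x' j) *
        ((K : ℝ) / Fintype.card E) ^ (ℓ + (Finset.univ.filter (fun j => ε x j ≠ ε x' j)).card)) /
      ((C.card : ℝ) * ((K : ℝ) / Fintype.card E / 2) ^ ℓ) ^ 2 := by
  set M := Fintype.card E with hM
  have hM0 : 0 < M := Fintype.card_pos
  have hMr : (0:ℝ) < M := by exact_mod_cast hM0
  have hKr : (0:ℝ) < K := by exact_mod_cast hK0
  have hq := le_qq hM0 hK
  have hq2 := qq_le (K := K) hM0
  set q := qq M K with hqd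
  set p : ℝ := (K:ℝ) / M with hp
  have hp0 : 0 < p := by positivity
  have hq0 : 0 < q := by linarith
  have hC0 : (0:ℝ) < C.card := by exact_mod_cast hC.card_pos
  set I : X → (Fin ℓ → Fin K → E) → ℝ := fun x g => ∏ j, ind (∃ i, g j i = ε x j) with hI
  set Y := ∑ x ∈ C, ∑ x' ∈ C, ind (∃ j, ε x j = ε x' j) *
        p ^ (ℓ + (Finset.univ.filter (fun j => ε x j ≠ ε x' j)).card) with hY
  have hY0 : 0 ≤ Y := Finset.sum_nonneg fun x _ => Finset.sum_nonneg fun x' _ =>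
    mul_nonneg (ind_nonneg _) (by positivity)
  have hμ : 0 < (C.card : ℝ) * q ^ ℓ := by positivity
  have h := cheb (fun g => ∑ x ∈ C, I x g) (C.card * q ^ ℓ) Y hμ ?_ ?_
  · refine le_trans (av_mono ?_) (h.trans ?_)
    · intro g
      apply ind_mono
      intro h
      rw [Finset.sum_eq_zero]
      · positivity
      · intro x hx
        obtain ⟨j, hj⟩ := h x hx
        exact Finset.prod_eq_zero (Finset.mem_univ j) (ind_false (by push Not; exact hj))
    · gcongr
  · rw [av_sum]
    have : ∀ x ∈ C, av (I x) = q ^ ℓ := by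
      intro x _
      rw [hI]
      dsimp only
      rw [av_pi (fun j (gj : Fin K → E) => ind (∃ i, gj i = ε x j))]
      simp_rw [cover_one]
      simp [hqd, hM]
    rw [Finset.sum_congr rfl this]; simp
  · simp_rw [Finset.sum_mul_sum]
    rw [av_sum]
    have key : ∀ x ∈ C, ∀ x' ∈ C, av (fun g => I x g * I x' g) ≤
       (q ^ ℓ) ^ 2 + ind (∃ j, ε x j = ε x' j) *
        p ^ (ℓ + (Finset.univ.filter (fun j => ε x j ≠ ε x' j)).card) := by
      intro x _ x' _
      have e1 : (fun g => I x g * I x' g) = fun g => ∏ j, (ind (∃ i, g j i = ε x j) * ind (∃ i, g j i = ε x' j)) := by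
        funext g; rw [hI]; dsimp only; rw [Finset.prod_mul_distrib]
      rw [e1, av_pi (fun j (gj : Fin K → E) => ind (∃ i, gj i = ε x j) * ind (∃ i, gj i = ε x' j))]
      have e2 : ∏ j, av (fun (gj : Fin K → E) => ind (∃ i, gj i = ε x j) * ind (∃ i, gj i = ε x' j))
          ≤ ∏ j, (q * if ε x j ≠ ε x' j then q else 1) := by
        apply Finset.prod_le_prod
        · intro j _; exact av_nonneg fun g => mul_nonneg (ind_nonneg _) (ind_nonneg _)
        · intro j _
          by_cases hne : ε x j = ε x' j
          · rw [← hne]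
            simp only [ne_eq, not_true, if_false, mul_one]
            rw [hqd, hM, ← cover_one K (ε x j)]
            apply av_mono
            intro g
            have := ind_le_one (∃ i, g i = ε x j)
            have := ind_nonneg (∃ i, g i = ε x j)
            nlinarith
          · simp only [ne_eq, hne, not_false_eq_true, if_true]
            rw [← sq]
            exact cover_two K hne
      refine e2.trans ?_
      rw [Finset.prod_mul_distrib, Finset.prod_ite]
      simp only [Finset.prod_const, one_pow, mul_one, Finset.card_univ, Fintype.card_fin]
      by_cases hs : ∃ j, ε x j = ε x' j
      · rw [ind_true hs, one_mul, ← pow_add]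
        have : q ^ (ℓ + (Finset.univ.filter (fun j => ε x j ≠ ε x' j)).card) ≤
           p ^ (ℓ + (Finset.univ.filter (fun j => ε x j ≠ ε x' j)).card) := by gcongr
        have : 0 ≤ (q ^ ℓ) ^ 2 := by positivity
        linarith
      · rw [ind_false hs, zero_mul, add_zero]
        push Not at hs
        rw [Finset.filter_true_of_mem (fun j _ => hs j)]
        simp only [Finset.card_univ, Fintype.card_fin]
        rw [sq]
    have key2 : ∀ x ∈ C, av (fun g => ∑ x' ∈ C, I x g * I x' g) ≤
       ∑ x' ∈ C, ((q ^ ℓ) ^ 2 + ind (∃ j, ε x j = ε x' j) *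
        p ^ (ℓ + (Finset.univ.filter (fun j => ε x j ≠ ε x' j)).card)) := by
      intro x hx
      rw [av_sum]
      exact Finset.sum_le_sum (key x hx)
    refine (Finset.sum_le_sum key2).trans ?_
    simp_rw [Finset.sum_add_distrib]
    rw [← hY]
    simp
    apply le_of_eq; ring

end Cover


section Coupling

/-- append the new elements of a list -/
noncomputable def dd {E : Type} : List E → List E → List E
  | l, [] => l
  | l, e :: es => dd (if e ∈ l then l else l ++ [e]) es

lemma dd_append {E : Type} (xs : List E) : ∀ (l ys : List E), dd l (xs ++ ys) = dd (dd l xs) ys := by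
  induction xs with
  | nil => intro l ys; rfl
  | cons x xs ih => intro l ys; simp only [List.cons_append, dd]; exact ih _ _

lemma dd_prefix {E : Type} (xs : List E) : ∀ (l : List E), l <+: dd l xs := by
  induction xs with
  | nil => intro l; exact List.prefix_rfl
  | cons x xs ih =>
    intro l
    simp only [dd]
    refine List.IsPrefix.trans ?_ (ih _)
    split_ifs
    · exact List.prefix_rfl
    · exact List.prefix_append _ _

lemma mem_dd {E : Type} (xs : List E) (e : E) : ∀ (l : List E), e ∈ dd l xs ↔ e ∈ l ∨ e ∈ xs := by
  induction xs with
  | nil => intro l; simp [dd]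
  | cons x xs ih =>
    intro l
    simp only [dd]
    rw [ih]
    split_ifs with h
    · simp only [List.mem_cons]
      constructor
      · rintro (h1 | h1) <;> simp [h1]
      · rintro (h1 | h1 | h1)
        · exact Or.inl h1
        · subst h1; exact Or.inl h
        · exact Or.inr h1
    · simp [or_assoc]

/-- count of good completions -/
noncomputable def cnt {E : Type} [Fintype E] (Q : List E → Prop) (k : ℕ) (l : List E) : ℝ :=
  ∑ f : Fin k → E, ind ((l ++ List.ofFn f).Nodup ∧ Q (l ++ List.ofFn f))

/-- probability for independent draws -/
noncomputable def bav {E : Type} [Fintype E] (Q : List E → Prop) (k : ℕ) (l : List E) : ℝ :=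
  av (fun g : Fin k → E => ind (Q (dd l (List.ofFn g))))

lemma cnt_zero {E : Type} [Fintype E] (Q : List E → Prop) (l : List E) (hl : l.Nodup) :
    cnt Q 0 l = ind (Q l) := by
  simp [cnt, hl]

lemma cnt_succ {E : Type} [Fintype E] (Q : List E → Prop) (k : ℕ) (l : List E) :
    cnt Q (k+1) l = ∑ e, (if e ∈ l then 0 else cnt Q k (l ++ [e])) := by
  unfold cnt
  rw [sum_cons]
  apply Finset.sum_congr rfl
  intro e _
  simp only [List.ofFn_cons]
  split_ifs with h
  · apply Finset.sum_eq_zero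
    intro f _
    apply ind_false
    rintro ⟨h1, _⟩
    rw [List.nodup_append] at h1
    exact h1.2.2 e h e (by simp) rfl
  · simp

lemma bav_zero {E : Type} [Fintype E] (Q : List E → Prop) (l : List E) :
    bav Q 0 l = ind (Q l) := by
  unfold bav
  simp only [List.ofFn_zero, dd]
  exact av_const _

lemma bav_succ {E : Type} [Fintype E] (Q : List E → Prop) (k : ℕ) (l : List E) :
    bav Q (k+1) l = av (fun e => bav Q k (if e ∈ l then l else l ++ [e])) := by
  unfold bav
  rw [av_cons]
  simp only [List.ofFn_cons, dd]

lemma sum_split {E : Type} [Fintype E] (l : List E) (hl : l.Nodup) (c : ℝ) :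
    ∑ e : E, (if e ∈ l then c else 0) = l.length * c := by
  rw [← Finset.sum_filter, Finset.sum_const, nsmul_eq_mul]
  congr 2
  rw [← List.toFinset_card_of_nodup hl]
  congr 1
  ext e; simp

lemma cnt_true {E : Type} [Fintype E] (k : ℕ) : ∀ (l : List E), l.Nodup →
    cnt (fun _ => True) k l = ((Fintype.card E - l.length).descFactorial k : ℝ) := by
  induction k with
  | zero => intro l hl; rw [cnt_zero _ _ hl, ind_true trivial]; simp
  | succ k ih =>
    intro l hl
    rw [cnt_succ]
    have hlen : l.length ≤ Fintype.card E := hl.length_le_card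
    have h1 : ∀ e ∈ (Finset.univ : Finset E), (if e ∈ l then 0 else cnt (fun _ => True) k (l ++ [e])) =
        ((Fintype.card E - (l.length + 1)).descFactorial k : ℝ) -
        (if e ∈ l then ((Fintype.card E - (l.length + 1)).descFactorial k : ℝ) else 0) := by
      intro e _
      split_ifs with h
      · ring
      · rw [ih _ (by
          rw [List.nodup_append]; refine ⟨hl, by simp, ?_⟩
          intro a ha b hb hab; simp at hb; subst hb; subst hab; exact h ha)]
        simp
    rw [Finset.sum_congr rfl h1, Finset.sum_sub_distrib, sum_split l hl]
    simp only [Finset.sum_const, Finset.card_univ, nsmul_eq_mul]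
    rcases Nat.eq_zero_or_pos (Fintype.card E - l.length) with h0 | hpos
    · have : (Fintype.card E : ℝ) = l.length := by exact_mod_cast (by omega : Fintype.card E = l.length)
      rw [h0, this]; simp
    · obtain ⟨m, hm⟩ : ∃ m, Fintype.card E - l.length = m + 1 := ⟨_, (Nat.sub_add_cancel hpos).symm⟩
      have h2 : Fintype.card E - (l.length + 1) = m := by omega
      rw [hm, h2, Nat.succ_descFactorial_succ]
      have : (Fintype.card E : ℝ) = l.length + m + 1 := by exact_mod_cast (by omega : Fintype.card E = l.length + m + 1)
      rw [this]; push_cast; ring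

lemma cnt_le_ind {E : Type} [Fintype E] (Q : List E → Prop) (hQ : ∀ l r, Q (l ++ r) → Q l) (k : ℕ)
    (l : List E) (hl : l.Nodup) :
    cnt Q k l ≤ ind (Q l) * ((Fintype.card E - l.length).descFactorial k : ℝ) := by
  rw [← cnt_true k l hl]
  unfold cnt
  rw [Finset.mul_sum]
  apply Finset.sum_le_sum
  intro f _
  by_cases h : Q l
  · rw [ind_true h, one_mul]
    exact ind_mono fun h => ⟨h.1, trivial⟩
  · rw [ind_false (fun h' => h (hQ _ _ h'.2))]
    exact mul_nonneg (ind_nonneg _) (ind_nonneg _)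

lemma cnt_le_bav {E : Type} [Fintype E] [Nonempty E] (Q : List E → Prop) (hQ : ∀ l r, Q (l ++ r) → Q l) (j : ℕ) :
    ∀ (k : ℕ) (l : List E), j ≤ k → l.Nodup →
    cnt Q k l ≤ bav Q j l * ((Fintype.card E - l.length).descFactorial k : ℝ) := by
  induction j with
  | zero => intro k l _ hl; rw [bav_zero]; exact cnt_le_ind Q hQ k l hl
  | succ j ih =>
    intro k l hk hl
    obtain ⟨k, rfl⟩ : ∃ k', k = k' + 1 := ⟨k - 1, by omega⟩
    have hlen : l.length ≤ Fintype.card E := hl.length_le_card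
    have hM : (0:ℝ) < Fintype.card E := by exact_mod_cast Fintype.card_pos
    set D : ℝ := ((Fintype.card E - l.length).descFactorial (k+1) : ℝ) with hD
    have h1 := ih (k+1) l (by omega) hl
    have h2 : ∀ e : E, (if e ∈ l then cnt Q (k+1) l else 0) +
        ((Fintype.card E - l.length : ℕ) : ℝ) * (if e ∈ l then 0 else cnt Q k (l ++ [e])) ≤
        bav Q j (if e ∈ l then l else l ++ [e]) * D := by
      intro e
      split_ifs with h
      · rw [mul_zero, add_zero]; exact h1
      · have h3 := ih k (l ++ [e]) (by omega) (by
          rw [List.nodup_append]; refine ⟨hl, by simp, ?_⟩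
          intro a ha b hb hab; simp at hb; subst hb; subst hab; exact h ha)
        have hlt : l.length < Fintype.card E := by
          have : (e :: l).Nodup := List.nodup_cons.2 ⟨h, hl⟩
          have := this.length_le_card
          simpa using this
        obtain ⟨m, hm⟩ : ∃ m, Fintype.card E - l.length = m + 1 :=
          ⟨_, (Nat.sub_add_cancel (by omega : 1 ≤ Fintype.card E - l.length)).symm⟩
        have h2 : Fintype.card E - (l ++ [e]).length = m := by simp; omega
        rw [h2] at h3
        rw [hD, hm, Nat.succ_descFactorial_succ]
        push_cast
        have hm0 : (0:ℝ) ≤ m + 1 := by positivity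
        have := mul_le_mul_of_nonneg_left h3 hm0
        linarith
    have h3 := Finset.sum_le_sum (fun e (_ : e ∈ (Finset.univ : Finset E)) => h2 e)
    rw [Finset.sum_add_distrib, sum_split l hl, ← Finset.mul_sum, ← cnt_succ, ← Finset.sum_mul] at h3
    rw [bav_succ]
    unfold av
    rw [div_mul_eq_mul_div, le_div_iff₀ hM]
    refine le_trans (le_of_eq ?_) h3
    rw [Nat.cast_sub hlen]
    ring

end Coupling


section Combi

lemma walk_aux {V : Type} (x : ℕ → V) (t : ℕ) :
    ((Finset.range (t+1)).image x).card ≤ ((Finset.range t).image (fun a => s(x a, x (a+1)))).card ∨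
    (((Finset.range (t+1)).image x).card ≤
        ((Finset.range t).image (fun a => s(x a, x (a+1)))).card + 1 ∧
      ∃ d : V → ℕ, d (x 0) = 0 ∧ (∀ a < t, d (x a) ≤ d (x (a+1)) + 1 ∧ d (x (a+1)) ≤ d (x a) + 1) ∧
        2 * ((Finset.range (t+1)).image x).card ≤ t + d (x t) + 2) := by
  induction t with
  | zero => right; simp; exact ⟨fun _ => 0, rfl⟩
  | succ t ih =>
    set U := (Finset.range (t+1)).image x with hU
    set T := (Finset.range t).image (fun a => s(x a, x (a+1))) with hT
    have hU' : (Finset.range (t+1+1)).image x = insert (x (t+1)) U := by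
      rw [Finset.range_add_one, Finset.image_insert]
    have hT' : (Finset.range (t+1)).image (fun a => s(x a, x (a+1))) = insert (s(x t, x (t+1))) T := by
      rw [Finset.range_add_one, Finset.image_insert]
    rw [hU', hT']
    by_cases hv : x (t+1) ∈ U
    · rw [Finset.insert_eq_of_mem hv]
      by_cases he : s(x t, x (t+1)) ∈ T
      · rw [Finset.insert_eq_of_mem he]
        rcases ih with ih | ⟨h1, d, h2, h3, h4⟩
        · left; exact ih
        · right
          refine ⟨h1, d, h2, ?_⟩
          have hd : d (x t) ≤ d (x (t+1)) + 1 ∧ d (x (t+1)) ≤ d (x t) + 1 := by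
            rw [hT, Finset.mem_image] at he
            obtain ⟨a, ha, hae⟩ := he
            rw [Finset.mem_range] at ha
            have := h3 a ha
            rw [Sym2.eq_iff] at hae
            rcases hae with ⟨e1, e2⟩ | ⟨e1, e2⟩
            · rw [← e1, ← e2]; exact this
            · rw [← e1, ← e2]; exact this.symm
          refine ⟨?_, by omega⟩
          intro a ha
          rcases Nat.lt_succ_iff_lt_or_eq.1 ha with h | rfl
          · exact h3 a h
          · exact hd
      · rw [Finset.card_insert_of_notMem he]
        left
        rcases ih with ih | ⟨h1, _⟩ <;> omega
    · have he : s(x t, x (t+1)) ∉ T := by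
        intro he
        rw [hT, Finset.mem_image] at he
        obtain ⟨a, ha, hae⟩ := he
        rw [Finset.mem_range] at ha
        apply hv
        rw [hU, Finset.mem_image]
        rw [Sym2.eq_iff] at hae
        rcases hae with ⟨e1, e2⟩ | ⟨e1, e2⟩
        · exact ⟨a+1, by simp; omega, e2⟩
        · exact ⟨a, by simp; omega, e1⟩
      rw [Finset.card_insert_of_notMem he, Finset.card_insert_of_notMem hv]
      rcases ih with ih | ⟨h1, d, h2, h3, h4⟩
      · left; omega
      · right
        refine ⟨by omega, Function.update d (x (t+1)) (d (x t) + 1), ?_⟩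
        have hne : ∀ a ≤ t, Function.update d (x (t+1)) (d (x t) + 1) (x a) = d (x a) := by
          intro a ha
          apply Function.update_of_ne
          intro h
          apply hv
          rw [← h, hU, Finset.mem_image]
          exact ⟨a, by simp; omega, rfl⟩
        refine ⟨by rw [hne 0 (by omega)]; exact h2, ?_, ?_⟩
        · intro a ha
          rcases Nat.lt_succ_iff_lt_or_eq.1 ha with h | rfl
          · rw [hne a (by omega), hne (a+1) (by omega)]; exact h3 a h
          · rw [hne a le_rfl, Function.update_self]; omega
        · rw [Function.update_self]; omega

lemma walk_closed {V : Type} (x : ℕ → V) (L : ℕ) (hL : 0 < L) (hx : x L = x 0) :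
    ((Finset.range L).image x).card ≤ ((Finset.range L).image (fun a => s(x a, x (a+1)))).card ∨
    (((Finset.range L).image x).card ≤
        ((Finset.range L).image (fun a => s(x a, x (a+1)))).card + 1 ∧
        2 * ((Finset.range L).image x).card ≤ L + 2) := by
  have hU : (Finset.range (L+1)).image x = (Finset.range L).image x := by
    rw [Finset.range_add_one, Finset.image_insert, Finset.insert_eq_of_mem]
    rw [hx]
    exact Finset.mem_image_of_mem _ (by simpa using hL)
  have := walk_aux x L
  rw [hU] at this
  rcases this with h | ⟨h1, d, h2, h3, h4⟩
  · exact Or.inl h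
  · right
    rw [hx, h2] at h4
    exact ⟨h1, by omega⟩

/-- 0/1 indicator -/
noncomputable def bb (p : Prop) : ℕ := if p then 1 else 0

lemma bb_le (p : Prop) : bb p ≤ 1 := by unfold bb; split_ifs <;> norm_num

lemma local_balance (S : ℕ → Prop) (m : ℕ) :
    2 * m * (∑ i ∈ Finset.range m, bb (S i ∧ S (i+1)) + bb (S 0 ∧ S m)) + (m + 1) * (bb (S 0) + bb (S m))
      ≤ 2 * (m + 1) * (∑ i ∈ Finset.range (m+1), bb (S i)) := by
  by_cases hall : ∀ i ≤ m, S i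
  · have h1 : ∑ i ∈ Finset.range m, bb (S i ∧ S (i+1)) = m := by
      rw [Finset.sum_congr rfl (g := fun _ => 1)]
      · simp
      · intro i hi; rw [Finset.mem_range] at hi
        simp [bb, hall i (by omega), hall (i+1) (by omega)]
    have h2 : ∑ i ∈ Finset.range (m+1), bb (S i) = m + 1 := by
      rw [Finset.sum_congr rfl (g := fun _ => 1)]
      · simp
      · intro i hi; rw [Finset.mem_range] at hi
        simp [bb, hall i (by omega)]
    rw [h1, h2]
    simp [bb, hall 0 (by omega), hall m le_rfl]
    nlinarith
  by_cases hnone : ∀ i ≤ m, ¬ S i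
  · have h1 : ∑ i ∈ Finset.range m, bb (S i ∧ S (i+1)) = 0 := by
      apply Finset.sum_eq_zero
      intro i hi; rw [Finset.mem_range] at hi
      simp [bb, hnone i (by omega)]
    rw [h1]
    simp [bb, hnone 0 (by omega), hnone m le_rfl]
  have key : ∑ i ∈ Finset.range m, bb (S i ∧ S (i+1)) + bb (S 0 ∧ S m) + 1 ≤
      ∑ i ∈ Finset.range (m+1), bb (S i) := by
    have hex : ∃ i, i ≤ m ∧ S i ∧ ((i < m ∧ ¬ S (i+1)) ∨ (i = m ∧ ¬ S 0)) := by
      by_contra hcon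
      push Not at hcon
      apply hall
      have h0 : S 0 := by
        push Not at hnone
        obtain ⟨i, hi, hSi⟩ := hnone
        have : ∀ k, i + k ≤ m → S (i + k) := by
          intro k
          induction k with
          | zero => intro _; exact hSi
          | succ k ih => intro hk; exact (hcon (i+k) (by omega) (ih (by omega))).1 (by omega)
        have hm := this (m - i) (by omega)
        rw [Nat.add_sub_cancel' hi] at hm
        exact (hcon m le_rfl hm).2 rfl
      intro i
      induction i with
      | zero => intro _; exact h0
      | succ i ih => intro hi; exact (hcon i (by omega) (ih (by omega))).1 (by omega)
    obtain ⟨i, hi, hSi, hcase⟩ := hex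
    have hpt : ∀ j, bb (S j ∧ S (j+1)) ≤ bb (S j) := by
      intro j; unfold bb; split_ifs <;> first | omega | simp_all
    have hpt2 : bb (S 0 ∧ S m) ≤ bb (S m) := by
      unfold bb; split_ifs <;> first | omega | simp_all
    rw [Finset.sum_range_succ]
    rcases hcase with ⟨him, hn⟩ | ⟨rfl, hn⟩
    · have : ∑ i ∈ Finset.range m, bb (S i ∧ S (i+1)) < ∑ i ∈ Finset.range m, bb (S i) := by
        apply Finset.sum_lt_sum (fun j _ => hpt j)
        exact ⟨i, by simpa using him, by simp [bb, hSi, hn]⟩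
      omega
    · have : ∑ i ∈ Finset.range i, bb (S i ∧ S (i+1)) ≤ ∑ i ∈ Finset.range i, bb (S i) :=
        Finset.sum_le_sum (fun j _ => hpt j)
      simp only [bb, hSi, hn, and_true, if_true, if_false]
      simp only [bb] at this
      omega
  have b1 := bb_le (S 0)
  have b2 := bb_le (S m)
  set e := ∑ i ∈ Finset.range m, bb (S i ∧ S (i+1)) + bb (S 0 ∧ S m)
  set v := ∑ i ∈ Finset.range (m+1), bb (S i)
  nlinarith

lemma sum_blocks (f : ℕ → ℕ) (m k : ℕ) :
    ∑ a ∈ Finset.range (k * m), f a = ∑ j ∈ Finset.range k, ∑ i ∈ Finset.range m, f (j * m + i) := by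
  induction k with
  | zero => simp
  | succ k ih => rw [Nat.succ_mul, Finset.sum_range_add, ih, Finset.sum_range_succ]

lemma balance (S : ℕ → Prop) (m : ℕ) (hper : S ((m+1) * m) ↔ S 0) :
    m * (∑ a ∈ Finset.range ((m+1) * m), bb (S a ∧ S (a+1)) +
      ∑ j ∈ Finset.range (m+1), bb (S (j * m) ∧ S ((j+1) * m))) ≤
    (m+1) * ∑ a ∈ Finset.range ((m+1) * m), bb (S a) := by
  rw [sum_blocks (fun a => bb (S a ∧ S (a+1))), sum_blocks (fun a => bb (S a))]
  have h := fun j (_ : j ∈ Finset.range (m+1)) => local_balance (fun i => S (j * m + i)) m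
  have h2 := Finset.sum_le_sum h
  simp only [add_zero] at h2
  have e : ∀ j, j * m + m = (j+1) * m := fun j => by ring
  simp_rw [Finset.sum_range_succ (fun i => bb (S (_ * m + i))) m, e] at h2
  rw [Finset.sum_add_distrib, ← Finset.mul_sum, ← Finset.mul_sum, ← Finset.mul_sum,
    Finset.sum_add_distrib, Finset.sum_add_distrib, Finset.sum_add_distrib] at h2
  have tel : ∑ j ∈ Finset.range (m+1), bb (S ((j+1) * m)) = ∑ j ∈ Finset.range (m+1), bb (S (j * m)) := by
    have h1 := Finset.sum_range_succ (fun j => bb (S (j * m))) (m+1)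
    have h2 := Finset.sum_range_succ' (fun j => bb (S (j * m))) (m+1)
    have h3 : bb (S ((m+1) * m)) = bb (S (0 * m)) := by rw [zero_mul]; unfold bb; simp only [hper]
    omega
  rw [tel] at h2
  simp only [← add_assoc] at h2 ⊢
  nlinarith

end Combi


section Closed

/-- periodic extension -/
def xx {V : Type} {L : ℕ} (hL : 0 < L) (x : Fin L → V) (a : ℕ) : V := x ⟨a % L, Nat.mod_lt _ hL⟩

open Matrix in
lemma trace_lower {V : Type} [Fintype V] [DecidableEq V] [Nonempty V] (A : Matrix V V ℝ) (hA : Aᵀ = A) (k : ℕ) :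
    ((∑ u, ∑ v, A u v) / Fintype.card V) ^ (2 * k) ≤ (A ^ (2 * k)).trace := by
  set n : ℝ := (Fintype.card V : ℝ) with hn
  have hn0 : 0 < n := by rw [hn]; exact_mod_cast Fintype.card_pos
  set w : ℕ → V → ℝ := fun k => (A ^ k) *ᵥ (fun _ => 1) with hw
  have hsymm : ∀ k, (A ^ k)ᵀ = A ^ k := fun k => by rw [Matrix.transpose_pow, hA]
  have hdot : ∀ i j, w i ⬝ᵥ w j = (fun _ => 1) ⬝ᵥ ((A ^ (i + j)) *ᵥ (fun _ => (1:ℝ))) := by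
    intro i j
    rw [hw]
    dsimp only
    rw [Matrix.dotProduct_mulVec, ← Matrix.mulVec_transpose, hsymm, Matrix.mulVec_mulVec, ← pow_add,
      dotProduct_comm, add_comm]
  set s : ℕ → ℝ := fun k => w k ⬝ᵥ w k with hs
  have hs0 : ∀ k, 0 ≤ s k := fun k => by
    rw [hs]; exact Finset.sum_nonneg fun u _ => mul_self_nonneg _
  have cs : ∀ i j, (w i ⬝ᵥ w j) ^ 2 ≤ s i * s j := by
    intro i j
    have := Finset.sum_mul_sq_le_sq_mul_sq Finset.univ (w i) (w j)
    simpa [hs, dotProduct, sq] using this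
  set e := ∑ u, ∑ v, A u v with he
  have hw0 : w 0 = fun _ => 1 := by rw [hw]; simp
  have hs00 : s 0 = n := by rw [hs]; dsimp only; rw [hw0]; simp [dotProduct, hn]
  have h01 : w 0 ⬝ᵥ w 1 = e := by
    rw [hw0, hw]; simp [dotProduct, Matrix.mulVec, he]
  set δ := (e / n) ^ 2 with hδ
  have hδ0 : 0 ≤ δ := by positivity
  have hstep : ∀ k, δ * s k ≤ s (k+1) := by
    intro k
    induction k with
    | zero =>
      have := cs 0 1
      rw [h01, hs00] at this
      rw [hs00, hδ, div_pow, div_mul_eq_mul_div, div_le_iff₀ (by positivity)]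
      simp only [zero_add]
      nlinarith
    | succ k ih =>
      have h1 := cs k (k+2)
      have h2 : w k ⬝ᵥ w (k+2) = s (k+1) := by
        rw [hs]; dsimp only; rw [hdot, hdot]; congr 3; ring
      rw [h2] at h1
      rcases (hs0 k).eq_or_lt with h0 | hpos
      · rw [← h0, zero_mul] at h1
        have : s (k+1) = 0 := by nlinarith [hs0 (k+1)]
        rw [this, mul_zero]; exact hs0 _
      · have h3 : s k * (δ * s (k+1)) ≤ s k * s (k+2) := by
          have := mul_le_mul_of_nonneg_right ih (hs0 (k+1))
          nlinarith
        exact le_of_mul_le_mul_left h3 hpos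
  have hpow : ∀ k, δ ^ k * n ≤ s k := by
    intro k
    induction k with
    | zero => simp [hs00]
    | succ k ih =>
      have := mul_le_mul_of_nonneg_left ih hδ0
      have := hstep k
      rw [pow_succ]; nlinarith
  have htr : s k ≤ n * (A ^ (2 * k)).trace := by
    have e1 : (A ^ (2 * k)).trace = ∑ u, ∑ v, (A ^ k) u v ^ 2 := by
      rw [two_mul, pow_add, Matrix.trace]
      apply Finset.sum_congr rfl
      intro u _
      rw [Matrix.diag_apply, Matrix.mul_apply]
      apply Finset.sum_congr rfl
      intro v _
      have : (A ^ k) v u = (A ^ k) u v := by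
        conv_lhs => rw [← hsymm k]
        rfl
      rw [this, sq]
    rw [e1, Finset.mul_sum, hs]
    dsimp only [dotProduct]
    apply Finset.sum_le_sum
    intro u _
    rw [hw]
    simp only [Matrix.mulVec, dotProduct, mul_one]
    have := sq_sum_le_card_mul_sum_sq (s := Finset.univ) (f := fun v => (A ^ k) u v)
    rw [← sq]
    simpa [hn] using this
  have := (hpow k).trans htr
  rw [pow_mul, ← hδ]
  rw [mul_comm] at this
  exact le_of_mul_le_mul_left this hn0

lemma trace_le_homs {V : Type} [Fintype V] [DecidableEq V] (G : SimpleGraph V) [DecidableRel G.Adj]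
    {L : ℕ} (hL : 0 < L) :
    (G.adjMatrix ℝ ^ L).trace ≤
      ((Finset.univ.filter (fun x : Fin L → V => ∀ a < L, G.Adj (xx hL x a) (xx hL x (a+1)))).card : ℝ) := by
  have h1 : (G.adjMatrix ℝ ^ L).trace = ∑ u, ((Fintype.card {p : G.Walk u u | p.length = L} : ℕ) : ℝ) := by
    rw [Matrix.trace]
    apply Finset.sum_congr rfl
    intro u _
    rw [Matrix.diag_apply, SimpleGraph.adjMatrix_pow_apply_eq_card_walk]
  rw [h1, ← Nat.cast_sum, ← Fintype.card_sigma]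
  norm_cast
  rw [← Fintype.card_coe]
  have hget : ∀ (u : V) (p : G.Walk u u) (hp : p.length = L) (a : ℕ), a ≤ L →
      xx hL (fun i : Fin L => p.getVert i) a = p.getVert a := by
    intro u p hp a ha
    unfold xx
    simp only
    rcases ha.lt_or_eq with h | rfl
    · rw [Nat.mod_eq_of_lt h]
    · rw [Nat.mod_self, p.getVert_zero, ← hp, p.getVert_length]
  refine Fintype.card_le_of_injective (fun q => ⟨fun i : Fin L => q.2.1.getVert i, ?_⟩) ?_
  · rw [Finset.mem_filter]
    refine ⟨Finset.mem_univ _, ?_⟩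
    intro a ha
    have hp : q.2.1.length = L := q.2.2
    rw [hget _ _ hp a ha.le, hget _ _ hp (a+1) ha]
    exact q.2.1.adj_getVert_succ (by omega)
  · rintro ⟨u, p, hp⟩ ⟨u', p', hp'⟩ h
    simp only [Subtype.mk.injEq] at h
    have hp : p.length = L := hp
    have hp' : p'.length = L := hp'
    have h0 := congrFun h ⟨0, hL⟩
    simp only [SimpleGraph.Walk.getVert_zero] at h0
    subst h0
    have : p = p' := by
      apply SimpleGraph.Walk.ext_getVert_le_length (by omega)
      intro k hk
      have := hget u p hp k (by omega)
      rw [← this, ← hget u p' hp' k (by omega), h]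
    subst this
    rfl

lemma hom_lower {n : ℕ} (hn : 0 < n) (G : SimpleGraph (Fin n)) {L : ℕ} (hL : 0 < L) (hev : Even L) :
    ((2 * (G.edgeFinset.card : ℝ)) / n) ^ L ≤
      ((Finset.univ.filter (fun x : Fin L → Fin n => ∀ a < L, G.Adj (xx hL x a) (xx hL x (a+1)))).card : ℝ) := by
  have : Nonempty (Fin n) := ⟨⟨0, hn⟩⟩
  obtain ⟨k, hk⟩ := hev
  have hk' : L = 2 * k := by omega
  have h := trace_lower (G.adjMatrix ℝ) (G.transpose_adjMatrix) k
  rw [← hk'] at h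
  have e : ∑ u, ∑ v, G.adjMatrix ℝ u v = 2 * (G.edgeFinset.card : ℝ) := by
    have := G.sum_degrees_eq_twice_card_edges
    have h2 : ((∑ v, G.degree v : ℕ) : ℝ) = ((2 * G.edgeFinset.card : ℕ) : ℝ) := by rw [this]
    push_cast at h2
    rw [← h2]
    apply Finset.sum_congr rfl
    intro u _
    simp only [SimpleGraph.adjMatrix_apply, Finset.sum_boole]
    rw [← SimpleGraph.card_neighborFinset_eq_degree]
    congr 2
    ext v; simp
  rw [e, Fintype.card_fin] at h
  exact h.trans (trace_le_homs G hL)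

end Closed


section Deterministic

lemma run_append {V : Type} {r : ℕ} (π : PainterStrategy V r) (l1 : List (Sym2 V)) :
    ∀ (h : EdgeHistory V r) (l2 : List (Sym2 V)),
    runPainterAux π h (l1 ++ l2) = runPainterAux π (runPainterAux π h l1) l2 := by
  induction l1 with
  | nil => intro h l2; rfl
  | cons e l1 ih => intro h l2; simp only [List.cons_append, runPainterAux]; exact ih _ _

lemma run_prefix {V : Type} {r : ℕ} (π : PainterStrategy V r) (l : List (Sym2 V)) :
    ∀ (h : EdgeHistory V r), h <+: runPainterAux π h l := by
  induction l with
  | nil => intro h; exact List.prefix_rfl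
  | cons e l ih =>
    intro h
    simp only [runPainterAux]
    exact (List.prefix_append _ _).trans (ih _)

lemma run_mem {V : Type} {r : ℕ} (π : PainterStrategy V r) (l : List (Sym2 V)) (e : Sym2 V) :
    ∀ (h : EdgeHistory V r), e ∈ l → ∃ c, (e, c) ∈ runPainterAux π h l := by
  induction l with
  | nil => intro h he; simp at he
  | cons e' l ih =>
    intro h he
    simp only [runPainterAux]
    rw [List.mem_cons] at he
    rcases he with rfl | he
    · exact ⟨π h e, (run_prefix π l _).subset (by simp)⟩
    · exact ih _ he

lemma run_mem_iff {V : Type} {r : ℕ} (π : PainterStrategy V r) (l : List (Sym2 V)) (e : Sym2 V) (c : Fin r) :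
    ∀ (h : EdgeHistory V r), (e, c) ∈ runPainterAux π h l → (e, c) ∈ h ∨ e ∈ l := by
  induction l with
  | nil => intro h he; exact Or.inl he
  | cons e' l ih =>
    intro h he
    simp only [runPainterAux] at he
    rcases ih _ he with h1 | h1
    · rw [List.mem_append] at h1
      rcases h1 with h1 | h1
      · exact Or.inl h1
      · simp at h1; right; simp [h1.1]
    · right; simp [h1]

lemma copy_of {V : Type} {ℓ : ℕ} (hℓ : 3 ≤ ℓ) (G : SimpleGraph V) (y : ℕ → V)
    (hinj : ∀ a < ℓ, ∀ b < ℓ, y a = y b → a = b)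
    (hadj : ∀ a, a + 1 < ℓ → G.Adj (y a) (y (a+1))) (hlast : G.Adj (y (ℓ-1)) (y 0)) :
    IsCopy (SimpleGraph.cycleGraph ℓ) G := by
  refine ⟨⟨fun i => y i, fun i j h => Fin.ext (hinj _ i.2 _ j.2 h)⟩, ?_⟩
  have key : ∀ u v : Fin ℓ, (v - u).val = 1 → G.Adj (y u) (y v) := by
    intro u v h
    rw [Fin.val_sub] at h
    have hu := u.2
    have hv := v.2
    by_cases huv : u.val ≤ v.val
    · have : ℓ - u.val + v.val = (v.val - u.val) + ℓ := by omega
      rw [this, Nat.add_mod_right, Nat.mod_eq_of_lt (by omega)] at h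
      have : v.val = u.val + 1 := by omega
      rw [this]; exact hadj _ (by omega)
    · rw [Nat.mod_eq_of_lt (by omega)] at h
      have h1 : v.val = 0 := by omega
      have h2 : u.val = ℓ - 1 := by omega
      rw [h1, h2]; exact hlast
  intro u v huv
  rw [SimpleGraph.cycleGraph_adj'] at huv
  rcases huv with h | h
  · exact (key v u h).symm
  · exact key u v h

lemma xx_inj {V : Type} {L : ℕ} (hL : 0 < L) (x : Fin L → V) (hx : Function.Injective x) (a b : ℕ)
    (h : xx hL x a = xx hL x b) : a % L = b % L := by
  have := hx h
  simpa using this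

lemma xx_add {V : Type} {L : ℕ} (hL : 0 < L) (x : Fin L → V) (a : ℕ) : xx hL x (a + L) = xx hL x a := by
  simp [xx]

lemma mod_inj_of_lt {L a b : ℕ} (h : a % L = b % L) (hab : a ≤ b) (hlt : b - a < L) : a = b := by
  have h1 : (L : ℕ) ∣ b - a := (Nat.modEq_iff_dvd' hab).1 h
  have := Nat.eq_zero_of_dvd_of_lt h1 hlt
  omega

lemma mod_inj_of_lt' {L a b : ℕ} (h : a % L = b % L) (h1 : a < b + L) (h2 : b < a + L) : a = b := by
  rcases le_total a b with hab | hab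
  · exact mod_inj_of_lt h hab (by omega)
  · exact (mod_inj_of_lt h.symm hab (by omega)).symm

lemma adj_colorGraph {V : Type} {r : ℕ} (h : EdgeHistory V r) (c : Fin r) (u v : V) :
    (colorGraph h c).Adj u v ↔ (s(u, v), c) ∈ h ∧ u ≠ v := by
  unfold colorGraph
  rw [SimpleGraph.fromEdgeSet_adj]; rfl

lemma determ {V : Type} {m L : ℕ} (hm : 2 ≤ m) (hLm : L = (m+1) * m) (hL : 0 < L) (x : Fin L → V)
    (hx : Function.Injective x) (h1 h : EdgeHistory V 2) (hsub : h1 ⊆ h) (c : Fin 2)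
    (hout : ∀ a < L, (s(xx hL x a, xx hL x (a+1)), c) ∈ h1)
    (hin : ∀ j < m+1, ∃ c', (s(xx hL x (j * m), xx hL x ((j+1)*m)), c') ∈ h) :
    HasMonoCopy (SimpleGraph.cycleGraph (m+1)) h := by
  have hdec : ∀ c c' : Fin 2, c' ≠ c → c' = 1 - c := by decide
  have hmL : m + 1 < L := by rw [hLm]; nlinarith
  by_cases hc : ∃ j < m+1, (s(xx hL x (j * m), xx hL x ((j+1)*m)), c) ∈ h
  · obtain ⟨j, hj, hjc⟩ := hc
    refine ⟨c, copy_of (by omega) _ (fun i => xx hL x (j * m + i)) ?_ ?_ ?_⟩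
    · intro a ha b hb hab
      have := mod_inj_of_lt' (xx_inj hL x hx _ _ hab) (by omega) (by omega)
      omega
    · intro a ha
      rw [adj_colorGraph]
      have hlt : j * m + a < L := by rw [hLm]; nlinarith
      refine ⟨hsub (hout _ hlt), ?_⟩
      intro hab
      have := mod_inj_of_lt' (xx_inj hL x hx _ _ hab) (by omega) (by omega)
      omega
    · rw [adj_colorGraph]
      simp only [Nat.add_sub_cancel, add_zero]
      have e : j * m + m = (j+1) * m := by ring
      rw [e, Sym2.eq_swap]
      refine ⟨hjc, ?_⟩
      intro hab
      rw [← e] at hab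
      have := mod_inj_of_lt' (xx_inj hL x hx _ _ hab) (by omega) (by omega)
      omega
  · push Not at hc
    have hin' : ∀ j < m+1, (s(xx hL x (j * m), xx hL x ((j+1)*m)), 1 - c) ∈ h := by
      intro j hj
      obtain ⟨c', hc'⟩ := hin j hj
      have hne : c' ≠ c := by rintro rfl; exact hc j hj hc'
      have : c' = 1 - c := hdec _ _ hne
      rw [← this]; exact hc'
    have hneq : ∀ j, xx hL x (j * m) ≠ xx hL x ((j+1)*m) := by
      intro j hab
      have e : j * m + m = (j+1) * m := by ring
      rw [← e] at hab
      have := mod_inj_of_lt' (xx_inj hL x hx _ _ hab) (by omega) (by omega)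
      omega
    refine ⟨1 - c, copy_of (by omega) _ (fun i => xx hL x (i * m)) ?_ ?_ ?_⟩
    · intro a ha b hb hab
      have ha' : a * m + m ≤ L := by rw [hLm]; nlinarith
      have hb' : b * m + m ≤ L := by rw [hLm]; nlinarith
      have := mod_inj_of_lt' (xx_inj hL x hx _ _ hab) (by omega) (by omega)
      exact Nat.eq_of_mul_eq_mul_right (by omega) this
    · intro a ha
      rw [adj_colorGraph]
      exact ⟨hin' a (by omega), hneq a⟩
    · rw [adj_colorGraph]
      have e : xx hL x (0 * m) = xx hL x ((m+1) * m) := by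
        rw [← hLm, zero_mul]
        have := xx_add hL x 0
        rw [zero_add] at this; exact this.symm
      simp only [Nat.add_sub_cancel]
      rw [e]
      exact ⟨hin' m (by omega), hneq m⟩

end Deterministic

section Sums

/-- outer edges -/
noncomputable def TT {V : Type} {L : ℕ} (hL : 0 < L) (x : Fin L → V) : Finset (Sym2 V) :=
  (Finset.range L).image (fun a => s(xx hL x a, xx hL x (a+1)))

/-- number of vertices -/
noncomputable def ci {ι V : Type} [Fintype ι] (x : ι → V) : ℕ := (Finset.univ.image x).card

lemma image_xx {V : Type} {L : ℕ} (hL : 0 < L) (x : Fin L → V) :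
    (Finset.range L).image (xx hL x) = Finset.univ.image x := by
  ext v
  simp only [Finset.mem_image, Finset.mem_range, Finset.mem_univ, true_and]
  constructor
  · rintro ⟨a, _, rfl⟩; exact ⟨_, rfl⟩
  · rintro ⟨a, rfl⟩; exact ⟨a, a.2, by simp [xx, Nat.mod_eq_of_lt a.2]⟩

lemma sum_ci (ι : Type) [Fintype ι] [DecidableEq ι] {n : ℕ} (hn : 0 < n) :
    ∑ y : ι → Fin n, ((n : ℝ) ^ ci y)⁻¹
      ≤ (Fintype.card ι + 1) * (Fintype.card ι : ℝ) ^ Fintype.card ι := by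
  refine le_trans (le_of_eq ?_) (sum_image ι hn)
  apply Finset.sum_congr
  · ext; simp
  intro y _
  unfold ci
  rw [show (fun a b : Fin n => Classical.propDecidable (a = b)) = instDecidableEqFin n from Subsingleton.elim _ _]

lemma walk_ci {V : Type} {L : ℕ} (hL : 0 < L) (x : Fin L → V) :
    ci x ≤ (TT hL x).card ∨ (ci x ≤ (TT hL x).card + 1 ∧ 2 * ci x ≤ L + 2) := by
  have hw := walk_closed (xx hL x) L hL (by simpa using xx_add hL x 0)
  rw [image_xx] at hw
  exact hw

lemma ci_lt {V : Type} {L : ℕ} (x : Fin L → V) (hni : ¬ Function.Injective x) : ci x < L := by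
  rcases lt_or_eq_of_le (Finset.card_image_le (s := Finset.univ) (f := x)) with h | h
  · rw [Finset.card_univ, Fintype.card_fin] at h; exact h
  · exact absurd (by
      have := Finset.card_image_iff.1 h
      intro a b hab; exact this (by simp) (by simp) hab) hni

lemma ci_pos {V : Type} {L : ℕ} (hL : 0 < L) (x : Fin L → V) : 0 < ci x := by
  unfold ci; rw [Finset.card_pos]
  exact ⟨x ⟨0, hL⟩, Finset.mem_image_of_mem _ (Finset.mem_univ _)⟩

lemma Zsum {n : ℕ} (hn : 0 < n) {L k : ℕ} (hL : 0 < L) (hk : L = 2 * k) (p θ : ℝ) (hp : 0 < p) (hp1 : p ≤ 1)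
    (hθ : 1 ≤ θ) (h1 : θ ≤ n * p) (h2 : n * θ ≤ (n * p) ^ k) :
    ∑ x ∈ Finset.univ.filter (fun x : Fin L → Fin n => ¬ Function.Injective x), p ^ (TT hL x).card
      ≤ ((n * p) ^ L / θ) * ((L + 1) * (L : ℝ) ^ L) := by
  have hsi := sum_ci (Fin L) hn
  rw [Fintype.card_fin] at hsi
  have hd1 : 1 ≤ n * p := hθ.trans h1
  have hn' : (0:ℝ) < n := by exact_mod_cast hn
  have hθ0 : 0 < θ := by linarith
  calc _ ≤ ∑ x ∈ Finset.univ.filter (fun x : Fin L → Fin n => ¬ Function.Injective x),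
        ((n * p) ^ L / θ) * ((n : ℝ) ^ ci x)⁻¹ := by
        apply Finset.sum_le_sum
        intro x hx
        have hni : ¬ Function.Injective x := (Finset.mem_filter.1 hx).2
        have hw := walk_ci hL x
        have hvL := ci_lt x hni
        have hv0 := ci_pos hL x
        set v := ci x with hv
        set e := (TT hL x).card with he
        rw [← div_eq_mul_inv, le_div_iff₀ (by positivity), le_div_iff₀ hθ0]
        rcases hw with hw | ⟨hw, hw2⟩
        · calc p ^ e * n ^ v * θ ≤ p ^ v * n ^ v * (n * p) := by
                gcongr ?_ * _ * ?_
                exact pow_le_pow_of_le_one hp.le hp1 hw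
            _ = (n * p) ^ (v + 1) := by rw [pow_succ, mul_pow]; ring
            _ ≤ (n * p) ^ L := pow_le_pow_right₀ hd1 (by omega)
        · obtain ⟨w, hvw⟩ : ∃ w, v = w + 1 := ⟨v - 1, by omega⟩
          rw [hvw]
          calc p ^ e * n ^ (w+1) * θ ≤ p ^ w * n ^ (w+1) * θ := by
                gcongr ?_ * _ * _
                exact pow_le_pow_of_le_one hp.le hp1 (by omega)
            _ = (n * p) ^ w * (n * θ) := by rw [pow_succ, mul_pow]; ring
            _ ≤ (n * p) ^ k * (n * p) ^ k := by
                gcongr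
                omega
            _ = (n * p) ^ L := by rw [← pow_add, hk]; congr 1; ring
    _ ≤ ∑ x : Fin L → Fin n, ((n * p) ^ L / θ) * ((n : ℝ) ^ ci x)⁻¹ := by
        apply Finset.sum_le_sum_of_subset_of_nonneg (Finset.filter_subset _ _)
        intros; positivity
    _ ≤ _ := by
        rw [← Finset.mul_sum]
        gcongr

/-- inner edges -/
def IE {V : Type} {L : ℕ} (hL : 0 < L) (m : ℕ) (x : Fin L → V) (j : ℕ) : Sym2 V :=
  s(xx hL x (j * m), xx hL x ((j+1)*m))

lemma edge_inj {V : Type} {L : ℕ} (hL : 0 < L) (hL3 : 3 ≤ L) (x : Fin L → V) (hx : Function.Injective x) :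
    Set.InjOn (fun a => s(xx hL x a, xx hL x (a+1))) (Finset.range L) := by
  intro a ha b hb hab
  simp only [Finset.coe_range, Set.mem_Iio] at ha hb
  simp only [Sym2.eq_iff] at hab
  rcases hab with ⟨h, _⟩ | ⟨h, h'⟩
  · exact mod_inj_of_lt' (xx_inj hL x hx _ _ h) (by omega) (by omega)
  · exfalso
    have e1 := xx_inj hL x hx _ _ h
    have e2 := xx_inj hL x hx _ _ h'
    have e3 : (a + 2) % L = a % L := by
      rw [show a + 2 = (a+1)+1 by ring, Nat.add_mod, e2, ← Nat.add_mod, e1]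
    have := mod_inj_of_lt' e3 (by omega) (by omega)
    omega

/-- edges in union -/
noncomputable def UU {V : Type} {L : ℕ} (hL : 0 < L) (x x' : Fin L → V) : Finset (Sym2 V) := TT hL x ∪ TT hL x'

/-- number of different inner edges -/
noncomputable def ND {V : Type} {L : ℕ} (hL : 0 < L) (m : ℕ) (x x' : Fin L → V) : ℕ :=
  (Finset.univ.filter (fun j : Fin (m+1) => IE hL m x j ≠ IE hL m x' j)).card

lemma Ycomb {V : Type} {m L : ℕ} (hm : 2 ≤ m) (hLm : L = (m+1) * m) (hL : 0 < L)
    (x x' : Fin L → V) (hx : Function.Injective x)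
    (hx' : Function.Injective x') (hj : ∃ j : Fin (m+1), IE hL m x j = IE hL m x' j) :
    ∃ s t : ℕ, ci (Sum.elim x x') + s ≤ 2 * L ∧ 1 ≤ t ∧ m * t ≤ (m+1) * s ∧
      2 * L + 2 * (m+1) ≤ (UU hL x x').card + (m + 1 + ND hL m x x') + t := by
  have hL3 : 3 ≤ L := by rw [hLm]; nlinarith
  set S : ℕ → Prop := fun a => xx hL x a ∈ Set.range x' with hS
  have hbal := balance S m (by
    rw [← hLm]; simp only [hS]
    have := xx_add hL x 0
    rw [zero_add] at this; rw [this])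
  rw [← hLm] at hbal
  set B1 := ∑ a ∈ Finset.range L, bb (S a ∧ S (a+1)) with hB1
  set B2 := ∑ j ∈ Finset.range (m+1), bb (S (j * m) ∧ S ((j+1) * m)) with hB2
  set s := ∑ a ∈ Finset.range L, bb (S a) with hs
  have hbbcard : ∀ (P : ℕ → Prop) [DecidablePred P] (k : ℕ), ∑ a ∈ Finset.range k, bb (P a) = ((Finset.range k).filter P).card := by
    intro P _ k
    rw [Finset.card_filter]
    apply Finset.sum_congr rfl; intro a _; unfold bb; congr
  have hSmem : ∀ a, xx hL x' a ∈ Set.range x' := fun a => ⟨_, rfl⟩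
  have hc1 : (TT hL x).card = L := by
    unfold TT; rw [Finset.card_image_of_injOn (edge_inj hL hL3 x hx)]; simp
  have hc1' : (TT hL x').card = L := by
    unfold TT; rw [Finset.card_image_of_injOn (edge_inj hL hL3 x' hx')]; simp
  have hinter : (TT hL x ∩ TT hL x').card ≤ B1 := by
    rw [hB1, hbbcard]
    calc _ ≤ (((Finset.range L).filter (fun a => S a ∧ S (a+1))).image
          (fun a => s(xx hL x a, xx hL x (a+1)))).card := by
          apply Finset.card_le_card
          intro e he
          rw [Finset.mem_inter] at he
          obtain ⟨a, ha, rfl⟩ := Finset.mem_image.1 he.1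
          obtain ⟨b, hb, hab⟩ := Finset.mem_image.1 he.2
          apply Finset.mem_image.2 ⟨a, Finset.mem_filter.2 ⟨ha, ?_⟩, rfl⟩
          simp only [Sym2.eq_iff] at hab
          rcases hab with ⟨h, h'⟩ | ⟨h, h'⟩
          · exact ⟨show xx hL x a ∈ _ from h ▸ hSmem _, show xx hL x (a+1) ∈ _ from h' ▸ hSmem _⟩
          · exact ⟨show xx hL x a ∈ _ from h' ▸ hSmem _, show xx hL x (a+1) ∈ _ from h ▸ hSmem _⟩
      _ ≤ _ := Finset.card_image_le
  have hunion := Finset.card_union_add_card_inter (TT hL x) (TT hL x')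
  have hIE : ∀ j, IE hL m x j = IE hL m x' j → S (j * m) ∧ S ((j+1)*m) := by
    intro j h
    unfold IE at h
    simp only [Sym2.eq_iff] at h
    rcases h with ⟨h, h'⟩ | ⟨h, h'⟩
    · exact ⟨show xx hL x (j*m) ∈ _ from h ▸ hSmem _, show xx hL x ((j+1)*m) ∈ _ from h' ▸ hSmem _⟩
    · exact ⟨show xx hL x (j*m) ∈ _ from h ▸ hSmem _, show xx hL x ((j+1)*m) ∈ _ from h' ▸ hSmem _⟩
  have hB2' : B2 = (Finset.univ.filter (fun j : Fin (m+1) => S (j * m) ∧ S ((j+1)*m))).card := by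
    rw [hB2, Finset.card_filter, Finset.sum_range]
    apply Finset.sum_congr rfl; intro a _; unfold bb; congr
  have heq : (Finset.univ.filter (fun j : Fin (m+1) => IE hL m x j = IE hL m x' j)).card ≤ B2 := by
    rw [hB2']
    apply Finset.card_le_card
    intro j hj
    rw [Finset.mem_filter] at hj ⊢
    exact ⟨hj.1, hIE _ hj.2⟩
  have hne := Finset.card_filter_add_card_filter_not (s := (Finset.univ : Finset (Fin (m+1))))
    (fun j : Fin (m+1) => IE hL m x j = IE hL m x' j)
  rw [Finset.card_univ, Fintype.card_fin] at hne
  have hB2pos : 1 ≤ B2 := by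
    refine le_trans ?_ heq
    obtain ⟨j, hj⟩ := hj
    exact Finset.card_pos.2 ⟨j, Finset.mem_filter.2 ⟨Finset.mem_univ _, hj⟩⟩
  -- image size
  have himg : (Finset.univ.image (Sum.elim x x')).card + s ≤ 2 * L := by
    have e1 : Finset.univ.image (Sum.elim x x') = Finset.univ.image x' ∪
        ((Finset.range L).filter (fun a => ¬ S a)).image (xx hL x) := by
      ext v
      simp only [Finset.mem_image, Finset.mem_univ, true_and, Finset.mem_union, Finset.mem_filter,
        Finset.mem_range]
      constructor
      · rintro ⟨a | a, rfl⟩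
        · by_cases h : x a ∈ Set.range x'
          · left; exact h
          · right
            refine ⟨a, ⟨a.2, ?_⟩, ?_⟩
            · simpa [hS, xx, Nat.mod_eq_of_lt a.2] using h
            · simp [xx, Nat.mod_eq_of_lt a.2]
        · left; exact ⟨a, rfl⟩
      · rintro (⟨a, rfl⟩ | ⟨a, _, rfl⟩)
        · exact ⟨Sum.inr a, rfl⟩
        · exact ⟨Sum.inl _, rfl⟩
    have e2 := Finset.card_union_le (Finset.univ.image x')
        (((Finset.range L).filter (fun a => ¬ S a)).image (xx hL x))
    have e3 : (Finset.univ.image x').card ≤ L := by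
      simpa using Finset.card_image_le (s := Finset.univ) (f := x')
    have e4 := Finset.card_image_le (s := (Finset.range L).filter (fun a => ¬ S a)) (f := xx hL x)
    have e5 := Finset.card_filter_add_card_filter_not (s := Finset.range L) S
    rw [Finset.card_range] at e5
    rw [e1, hs, hbbcard]
    omega
  set v := (Finset.univ.image (Sum.elim x x')).card with hv
  set ne := (Finset.univ.filter (fun j : Fin (m+1) => ¬ IE hL m x j = IE hL m x' j)).card with hne'
  set u := (TT hL x ∪ TT hL x').card with hu
  have hexp : 2 * L + 2 * (m+1) ≤ u + (m + 1 + ne) + (B1 + B2) := by omega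
  exact ⟨s, B1 + B2, himg, by omega, hbal, hexp⟩

lemma Yterm {n : ℕ} (hn : 0 < n) {m L : ℕ} (hm : 2 ≤ m) (hLm : L = (m+1) * m) (hL : 0 < L)
    (p θ : ℝ) (hp : 0 < p) (hp1 : p ≤ 1)
    (hθ : 1 ≤ θ) (h1 : θ ^ (m+1) ≤ n ^ m * p ^ (m+1)) (x x' : Fin L → Fin n) (hx : Function.Injective x)
    (hx' : Function.Injective x') (hj : ∃ j : Fin (m+1), IE hL m x j = IE hL m x' j) :
    p ^ ((UU hL x x').card + (m + 1 + ND hL m x x')) ≤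
    ((n:ℝ) ^ (2 * L) * p ^ (2 * L + 2 * (m+1)) / θ) * ((n : ℝ) ^ ci (Sum.elim x x'))⁻¹ := by
  have hn1 : (1:ℝ) ≤ n := by exact_mod_cast hn
  have hθ0 : 0 < θ := by linarith
  obtain ⟨s, t, himg, ht, hbal, hexp⟩ := Ycomb hm hLm hL x x' hx hx' hj
  set v := ci (Sum.elim x x') with hv
  set ne := ND hL m x x' with hne'
  set u := (UU hL x x').card with hu
  have hkey : θ ≤ n ^ s * p ^ t := by
    have : θ ^ (m+1) ≤ (n ^ s * p ^ t) ^ (m+1) := by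
      calc θ ^ (m+1) ≤ (θ ^ (m+1)) ^ t := by
            exact le_self_pow₀ (one_le_pow₀ hθ) (by omega)
        _ ≤ (n ^ m * p ^ (m+1)) ^ t := by gcongr
        _ = (n:ℝ) ^ (m * t) * p ^ (t * (m+1)) := by
            rw [mul_pow, ← pow_mul, ← pow_mul]; congr 2; ring
        _ ≤ (n:ℝ) ^ ((m+1) * s) * p ^ (t * (m+1)) := by
            gcongr
        _ = _ := by rw [mul_pow, ← pow_mul, ← pow_mul]; congr 2; ring
    exact le_of_pow_le_pow_left₀ (by omega) (by positivity) this
  rw [← div_eq_mul_inv, le_div_iff₀ (by positivity), le_div_iff₀ hθ0]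
  calc p ^ (u + (m+1+ne)) * n ^ v * θ ≤ p ^ (u + (m+1+ne)) * n ^ v * (n ^ s * p ^ t) := by gcongr
    _ = (n:ℝ) ^ (v + s) * p ^ (u + (m+1+ne) + t) := by rw [pow_add _ v, pow_add _ (u + _)]; ring
    _ ≤ (n:ℝ) ^ (2 * L) * p ^ (2 * L + 2 * (m+1)) := by
        gcongr ?_ * ?_
        · exact pow_le_pow_right₀ hn1 himg
        · exact pow_le_pow_of_le_one hp.le hp1 hexp

lemma Ysum {n : ℕ} (hn : 0 < n) {m L : ℕ} (hm : 2 ≤ m) (hLm : L = (m+1) * m) (hL : 0 < L)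
    (p θ : ℝ) (hp : 0 < p) (hp1 : p ≤ 1)
    (hθ : 1 ≤ θ) (h1 : θ ^ (m+1) ≤ n ^ m * p ^ (m+1)) :
    ∑ x ∈ Finset.univ.filter (fun x : Fin L → Fin n => Function.Injective x),
    ∑ x' ∈ Finset.univ.filter (fun x : Fin L → Fin n => Function.Injective x),
      ind (∃ j : Fin (m+1), IE hL m x j = IE hL m x' j) *
      p ^ ((UU hL x x').card + (m + 1 + ND hL m x x')) ≤
    ((n:ℝ) ^ (2 * L) * p ^ (2 * L + 2 * (m+1)) / θ) * ((2 * L + 1) * (2 * L : ℝ) ^ (2 * L)) := by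
  have hsi := sum_ci (Fin L ⊕ Fin L) hn
  rw [Fintype.card_sum, Fintype.card_fin, ← two_mul] at hsi
  push_cast at hsi
  have hre : ∑ x : Fin L → Fin n, ∑ x' : Fin L → Fin n, ((n : ℝ) ^ ci (Sum.elim x x'))⁻¹ =
      ∑ y : Fin L ⊕ Fin L → Fin n, ((n : ℝ) ^ ci y)⁻¹ := by
    rw [← Fintype.sum_prod_type' (fun x x' : Fin L → Fin n => ((n : ℝ) ^ ci (Sum.elim x x'))⁻¹)]
    exact Fintype.sum_equiv (Equiv.sumArrowEquivProdArrow (Fin L) (Fin L) (Fin n)).symm _ _ (fun x => rfl)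
  rw [← hre] at hsi
  have hθ0 : 0 < θ := by linarith
  set A := ((n:ℝ) ^ (2 * L) * p ^ (2 * L + 2 * (m+1)) / θ) with hA
  have hA0 : 0 ≤ A := by positivity
  calc _ ≤ ∑ x ∈ Finset.univ.filter (fun x : Fin L → Fin n => Function.Injective x),
    ∑ x' ∈ Finset.univ.filter (fun x : Fin L → Fin n => Function.Injective x),
      A * ((n : ℝ) ^ ci (Sum.elim x x'))⁻¹ := by
        apply Finset.sum_le_sum
        intro x hx
        apply Finset.sum_le_sum
        intro x' hx'
        by_cases hj : ∃ j : Fin (m+1), IE hL m x j = IE hL m x' j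
        · rw [ind_true hj, one_mul]
          exact Yterm hn hm hLm hL p θ hp hp1 hθ h1 x x' (Finset.mem_filter.1 hx).2 (Finset.mem_filter.1 hx').2 hj
        · rw [ind_false hj, zero_mul]; positivity
    _ ≤ ∑ x : Fin L → Fin n, ∑ x' : Fin L → Fin n,
          A * ((n : ℝ) ^ ci (Sum.elim x x'))⁻¹ := by
        refine le_trans (Finset.sum_le_sum_of_subset_of_nonneg (Finset.filter_subset _ _) ?_) ?_
        · intros; apply Finset.sum_nonneg; intros; positivity
        apply Finset.sum_le_sum
        intro x _
        apply Finset.sum_le_sum_of_subset_of_nonneg (Finset.filter_subset _ _)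
        intros; positivity
    _ ≤ _ := by
        simp only [← Finset.mul_sum]
        exact mul_le_mul_of_nonneg_left hsi hA0

end Sums

section Main

/-- edge slots -/
abbrev EE (n : ℕ) := {e : Sym2 (Fin n) // ¬ e.IsDiag}

lemma card_EE (n : ℕ) : Fintype.card (EE n) = n.choose 2 := by
  have := Sym2.card_subtype_not_diag (α := Fin n)
  rw [Fintype.card_fin] at this
  rw [← this]

lemma mem_TT {V : Type} {L : ℕ} (hL : 0 < L) (x : Fin L → V) (e : Sym2 V) (he : e ∈ TT hL x) :
    ∃ a < L, s(xx hL x a, xx hL x (a+1)) = e := by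
  obtain ⟨a, ha, h⟩ := Finset.mem_image.1 he
  exact ⟨a, Finset.mem_range.1 ha, h⟩

lemma mem_UU {V : Type} {L : ℕ} (hL : 0 < L) (x x' : Fin L → V) (e : Sym2 V) (he : e ∈ UU hL x x') :
    e ∈ TT hL x ∨ e ∈ TT hL x' := Finset.mem_union.1 he

/-- covering -/
def cov {n K : ℕ} (g : Fin K → EE n) (T : Finset (Sym2 (Fin n))) : Prop := ∀ e ∈ T, ∃ i, (g i).1 = e

lemma av_cov {n K : ℕ} [Nonempty (EE n)] (T : Finset (Sym2 (Fin n))) :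
    av (fun g : Fin K → EE n => ind (cov g T)) ≤ ((K : ℝ) / Fintype.card (EE n)) ^ T.card :=
  cover_le (fun e : EE n => e.1) Subtype.val_injective K T

/-- list of played edges -/
noncomputable def hist {n : ℕ} (π : PainterStrategy (Fin n) 2) (l : List (EE n)) : EdgeHistory (Fin n) 2 :=
  runPainter π ((dd [] l).map Subtype.val)

lemma hist_mem {n : ℕ} (π : PainterStrategy (Fin n) 2) (l : List (EE n)) (e : EE n) (he : e ∈ l) :
    ∃ c, (e.1, c) ∈ hist π l := by
  apply run_mem
  exact List.mem_map_of_mem ((mem_dd _ _ _).2 (Or.inr he))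

lemma hist_mem' {n : ℕ} (π : PainterStrategy (Fin n) 2) (l : List (EE n)) (e : Sym2 (Fin n)) (c : Fin 2)
    (he : (e, c) ∈ hist π l) : ∃ e' ∈ l, e'.1 = e := by
  rcases run_mem_iff π _ _ _ _ he with h | h
  · simp at h
  · rw [List.mem_map] at h
    obtain ⟨e', h1, h2⟩ := h
    rw [mem_dd] at h1
    rcases h1 with h1 | h1
    · simp at h1
    · exact ⟨e', h1, h2⟩

lemma hist_sub {n : ℕ} (π : PainterStrategy (Fin n) 2) (l l' : List (EE n)) :
    hist π l ⊆ hist π (l ++ l') := by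
  unfold hist
  rw [dd_append]
  obtain ⟨r, hr⟩ := dd_prefix l' (dd [] l)
  rw [← hr, List.map_append]
  unfold runPainter
  rw [run_append]
  exact (run_prefix _ _ _).subset

lemma edges_color {n K : ℕ} (π : PainterStrategy (Fin n) 2) (g : Fin K → EE n) :
    ∑ e : EE n, ind (∃ i, g i = e) ≤
      ∑ c : Fin 2, ((colorGraph (hist π (List.ofFn g)) c).edgeFinset.card : ℝ) := by
  rw [sum_ind]
  have h1 : ((Finset.univ.filter (fun e : EE n => ∃ i, g i = e)).map ⟨Subtype.val, Subtype.val_injective⟩) ⊆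
      (Finset.univ : Finset (Fin 2)).biUnion (fun c => (colorGraph (hist π (List.ofFn g)) c).edgeFinset) := by
    intro e he
    rw [Finset.mem_map] at he
    obtain ⟨e', he', rfl⟩ := he
    obtain ⟨i, hi⟩ := (Finset.mem_filter.1 he').2
    obtain ⟨c, hc⟩ := hist_mem π (List.ofFn g) e' (by rw [List.mem_ofFn]; exact ⟨i, hi⟩)
    rw [Finset.mem_biUnion]
    refine ⟨c, Finset.mem_univ _, ?_⟩
    rw [SimpleGraph.mem_edgeFinset]
    unfold colorGraph
    rw [SimpleGraph.edgeSet_fromEdgeSet]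
    exact ⟨hc, e'.2⟩
  have h2 := (Finset.card_le_card h1).trans Finset.card_biUnion_le
  rw [Finset.card_map] at h2
  exact_mod_cast h2

/-- degenerate count -/
noncomputable def ZZ {n K L : ℕ} (hL : 0 < L) (g : Fin K → EE n) : ℝ :=
  ∑ x ∈ Finset.univ.filter (fun x : Fin L → Fin n => ¬ Function.Injective x), ind (cov g (TT hL x))

lemma good {n K L : ℕ} (hn : 0 < n) (hL : 0 < L) (hev : Even L) (π : PainterStrategy (Fin n) 2) (g : Fin K → EE n)
    (hD : (K:ℝ) / 4 ≤ ∑ e : EE n, ind (∃ i, g i = e)) (q : ℝ) (hq : 0 ≤ q) (hqK : q ≤ K / (4 * n))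
    (hZ : ZZ hL g ≤ q ^ L / 2) :
    ∃ c : Fin 2, ∃ C : Finset (Fin L → Fin n), (∀ x ∈ C, Function.Injective x ∧ ∀ a < L,
      (s(xx hL x a, xx hL x (a+1)), c) ∈ hist π (List.ofFn g)) ∧ q ^ L / 2 ≤ (C.card : ℝ) := by
  have hE := hD.trans (edges_color π g)
  rw [Fin.sum_univ_two] at hE
  have hn' : (0:ℝ) < n := by exact_mod_cast hn
  obtain ⟨c, hc⟩ : ∃ c : Fin 2, (K:ℝ) / 8 ≤ ((colorGraph (hist π (List.ofFn g)) c).edgeFinset.card : ℝ) := by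
    by_contra! h
    have h0 := h 0
    have h1 := h 1
    linarith
  refine ⟨c, ?_⟩
  set h := hist π (List.ofFn g) with hh
  have hhom := hom_lower hn (colorGraph h c) hL hev
  have hq2 : q ^ L ≤ ((2 * ((colorGraph h c).edgeFinset.card : ℝ)) / n) ^ L := by
    apply pow_le_pow_left₀ hq
    refine hqK.trans ?_
    rw [div_le_div_iff₀ (by positivity) hn']
    nlinarith
  have hhom2 := hq2.trans hhom
  set A := Finset.univ.filter (fun x : Fin L → Fin n => ∀ a < L, (colorGraph h c).Adj (xx hL x a) (xx hL x (a+1))) with hA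
  have hA' : ∀ x ∈ A, ∀ a < L, (s(xx hL x a, xx hL x (a+1)), c) ∈ h := by
    intro x hx a ha
    have := (Finset.mem_filter.1 hx).2 a ha
    rw [adj_colorGraph] at this
    exact this.1
  refine ⟨A.filter (fun x => Function.Injective x), ?_, ?_⟩
  · intro x hx
    rw [Finset.mem_filter] at hx
    exact ⟨hx.2, hA' x hx.1⟩
  · have hs := Finset.card_filter_add_card_filter_not (s := A) (fun x => Function.Injective x)
    have hz : ((A.filter (fun x => ¬ Function.Injective x)).card : ℝ) ≤ ZZ hL g := by
      unfold ZZ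
      rw [sum_ind]
      have : (A.filter (fun x => ¬ Function.Injective x)) ⊆ (Finset.univ.filter (fun x : Fin L → Fin n => ¬ Function.Injective x)).filter (fun x => cov g (TT hL x)) := by
        intro x hx
        rw [Finset.mem_filter] at hx
        rw [Finset.mem_filter, Finset.mem_filter]
        refine ⟨⟨Finset.mem_univ _, hx.2⟩, ?_⟩
        intro e he
        obtain ⟨a, ha, rfl⟩ := mem_TT hL x _ he
        obtain ⟨e', h1, h2⟩ := hist_mem' π _ _ _ (hA' x hx.1 a ha)
        rw [List.mem_ofFn] at h1
        obtain ⟨i, hi⟩ := h1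
        exact ⟨i, by rw [hi, h2]⟩
      exact_mod_cast Finset.card_le_card this
    have hs' : ((A.filter (fun x => Function.Injective x)).card : ℝ) +
      ((A.filter (fun x => ¬ Function.Injective x)).card : ℝ) = A.card := by exact_mod_cast hs
    linarith

/-- pair count -/
noncomputable def YY {n K L : ℕ} (hL : 0 < L) (m : ℕ) (p : ℝ) (g : Fin K → EE n) : ℝ :=
  ∑ x ∈ Finset.univ.filter (fun x : Fin L → Fin n => Function.Injective x),
    ∑ x' ∈ Finset.univ.filter (fun x : Fin L → Fin n => Function.Injective x),
      ind (∃ j : Fin (m+1), IE hL m x j = IE hL m x' j) * p ^ (m + 1 + ND hL m x x') *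
        ind (cov g (UU hL x x'))

lemma YY_nonneg {n K L : ℕ} (hL : 0 < L) (m : ℕ) (p : ℝ) (hp : 0 ≤ p) (g : Fin K → EE n) : 0 ≤ YY hL m p g := by
  unfold YY
  apply Finset.sum_nonneg; intro x _
  apply Finset.sum_nonneg; intro x' _
  exact mul_nonneg (mul_nonneg (ind_nonneg _) (pow_nonneg hp _)) (ind_nonneg _)

lemma IE_not_diag {V : Type} {m L : ℕ} (hm : 2 ≤ m) (hLm : L = (m+1) * m) (hL : 0 < L)
    (x : Fin L → V) (hx : Function.Injective x) (j : ℕ) : ¬ (IE hL m x j).IsDiag := by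
  unfold IE
  rw [Sym2.mk_isDiag_iff]
  intro hab
  have hmL : m + 1 < L := by rw [hLm]; nlinarith
  have e : j * m + m = (j+1) * m := by ring
  rw [← e] at hab
  have := mod_inj_of_lt' (xx_inj hL x hx _ _ hab) (by omega) (by omega)
  omega

lemma second {n K m L : ℕ} [Nonempty (EE n)] (hK0 : 0 < K) (hK : K ≤ Fintype.card (EE n))
    (hm : 2 ≤ m) (hLm : L = (m+1) * m) (hL : 0 < L)
    (π : PainterStrategy (Fin n) 2) (g : Fin K → EE n) (b p : ℝ) (hb : 0 < b) (hp : p = (K:ℝ) / Fintype.card (EE n))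
    (c : Fin 2) (C : Finset (Fin L → Fin n)) (hC : ∀ x ∈ C, Function.Injective x ∧ ∀ a < L,
      (s(xx hL x a, xx hL x (a+1)), c) ∈ hist π (List.ofFn g)) (hCb : b ≤ (C.card : ℝ))
    (l2 : (Fin (m+1) → Fin K → EE n) → List (EE n)) (hl2 : ∀ g2 j i, g2 j i ∈ l2 g2) :
    av (fun g2 : Fin (m+1) → Fin K → EE n =>
      ind (¬ HasMonoCopy (SimpleGraph.cycleGraph (m+1)) (hist π (List.ofFn g ++ l2 g2)))) ≤
      4 * YY hL m p g / (b * (p / 2) ^ (m+1)) ^ 2 := by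
  have hM : (0:ℝ) < Fintype.card (EE n) := by exact_mod_cast Fintype.card_pos
  have hp0 : 0 < p := by rw [hp]; positivity
  set ε : (Fin L → Fin n) → Fin (m+1) → EE n := fun x j =>
    if h : ¬ (IE hL m x j).IsDiag then ⟨IE hL m x j, h⟩ else Classical.arbitrary _ with hε
  have hεv : ∀ x, Function.Injective x → ∀ j, (ε x j).1 = IE hL m x j := by
    intro x hx j
    simp only [hε]
    rw [dif_pos (IE_not_diag hm hLm hL x hx j)]
  have hεe : ∀ x x', Function.Injective x → Function.Injective x' → ∀ j,
      (ε x j = ε x' j ↔ IE hL m x j = IE hL m x' j) := by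
    intro x x' hx hx' j
    rw [← hεv x hx, ← hεv x' hx', Subtype.ext_iff]
  have hCne : C.Nonempty := by
    rw [← Finset.card_pos]
    have : (0:ℝ) < C.card := by linarith
    exact_mod_cast this
  have hsr := second_round K (m+1) hK0 hK ε C hCne
  rw [← hp] at hsr
  refine le_trans (av_mono (fun g2 => ind_mono ?_)) (hsr.trans ?_)
  · intro hno x hx
    by_contra! hall
    apply hno
    refine determ hm hLm hL x (hC x hx).1 _ _ (hist_sub π _ _) c (hC x hx).2 ?_
    intro j hj
    obtain ⟨i, hi⟩ := hall ⟨j, hj⟩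
    have := hist_mem π (List.ofFn g ++ l2 g2) (g2 ⟨j, hj⟩ i) (List.mem_append_right _ (hl2 _ _ _))
    rw [hi, hεv x (hC x hx).1] at this
    exact this
  · have hnum : ∑ x ∈ C, ∑ x' ∈ C, ind (∃ j, ε x j = ε x' j) *
        p ^ (m + 1 + (Finset.univ.filter (fun j => ε x j ≠ ε x' j)).card) ≤ YY hL m p g := by
      unfold YY
      have hsub : C ⊆ Finset.univ.filter (fun x : Fin L → Fin n => Function.Injective x) := by
        intro x hx
        exact Finset.mem_filter.2 ⟨Finset.mem_univ _, (hC x hx).1⟩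
      have hnn : ∀ x x' : Fin L → Fin n, 0 ≤ ind (∃ j : Fin (m+1), IE hL m x j = IE hL m x' j) * p ^ (m + 1 + ND hL m x x') *
        ind (cov g (UU hL x x')) := by
        intro x x'
        exact mul_nonneg (mul_nonneg (ind_nonneg _) (pow_nonneg hp0.le _)) (ind_nonneg _)
      refine le_trans ?_ (Finset.sum_le_sum_of_subset_of_nonneg hsub
        (fun x _ _ => Finset.sum_nonneg (fun x' _ => hnn x x')))
      apply Finset.sum_le_sum
      intro x hx
      refine le_trans ?_ (Finset.sum_le_sum_of_subset_of_nonneg hsub (fun x' _ _ => hnn x x'))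
      apply Finset.sum_le_sum
      intro x' hx'
      have hcT : ∀ x ∈ C, ∀ e ∈ TT hL x, ∃ i, (g i).1 = e := by
        intro x hx e he
        obtain ⟨a, ha, rfl⟩ := mem_TT hL x _ he
        obtain ⟨e', h1, h2⟩ := hist_mem' π _ _ _ ((hC x hx).2 a ha)
        rw [List.mem_ofFn] at h1
        obtain ⟨i, hi⟩ := h1
        exact ⟨i, by rw [hi, h2]⟩
      have hcov : cov g (UU hL x x') := by
        intro e he
        rcases mem_UU hL x x' e he with he | he
        · exact hcT x hx e he
        · exact hcT x' hx' e he
      rw [ind_true hcov, mul_one]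
      apply le_of_eq
      have e1 : (∃ j, ε x j = ε x' j) ↔ (∃ j : Fin (m+1), IE hL m x j = IE hL m x' j) :=
        exists_congr (hεe x x' (hC x hx).1 (hC x' hx').1)
      have e2 : (Finset.univ.filter (fun j => ε x j ≠ ε x' j)).card = ND hL m x x' := by
        unfold ND
        congr 1
        ext j
        simp only [Finset.mem_filter, ne_eq, hεe x x' (hC x hx).1 (hC x' hx').1]
      rw [e1, e2]
    have hYn := YY_nonneg hL m p hp0.le g
    gcongr
    refine le_trans (le_of_eq ?_) hnum
    refine Finset.sum_congr rfl (fun x _ => Finset.sum_congr rfl (fun x' _ => ?_))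
    congr!

lemma main_bound (m : ℕ) (hm : 2 ≤ m) : ∃ c : ℝ, 0 ≤ c ∧ ∀ (n K : ℕ) (θ : ℝ), 2 ≤ n → 0 < K →
    K ≤ Fintype.card (EE n) → 1 ≤ θ →
    θ ^ (m+1) ≤ n ^ m * ((K:ℝ) / Fintype.card (EE n)) ^ (m+1) →
    ∀ (π : PainterStrategy (Fin n) 2)
    (l2 : (Fin (m+1) → Fin K → EE n) → List (EE n)), (∀ g2 j i, g2 j i ∈ l2 g2) →
    av (fun g : Fin K → EE n => av (fun g2 : Fin (m+1) → Fin K → EE n =>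
      ind (¬ HasMonoCopy (SimpleGraph.cycleGraph (m+1)) (hist π (List.ofFn g ++ l2 g2))))) ≤ c / θ + 8 / K := by
  obtain ⟨L, hLm⟩ : ∃ L, L = (m+1) * m := ⟨_, rfl⟩
  have hL : 0 < L := by rw [hLm]; positivity
  obtain ⟨k, hk⟩ : ∃ k, L = 2 * k := by
    have : Even L := by rw [hLm, mul_comm]; exact Nat.even_mul_succ_self m
    obtain ⟨k, hk⟩ := this
    exact ⟨k, by omega⟩
  have hkm : m + 1 ≤ k := by nlinarith
  set c1 : ℝ := (L + 1) * (L : ℝ) ^ L with hc1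
  set c2 : ℝ := (2 * L + 1) * (2 * L : ℝ) ^ (2 * L) with hc2
  refine ⟨2 * 16 ^ L * c1 + 4 * c2 * (2 * 16 ^ L * 2 ^ (m+1)) ^ 2, by positivity, ?_⟩
  intro n K θ hn hK0 hK hθ hθp π l2 hl2
  have hMpos : 0 < Fintype.card (EE n) := by omega
  have : Nonempty (EE n) := Fintype.card_pos_iff.1 hMpos
  have hM : (0:ℝ) < Fintype.card (EE n) := by exact_mod_cast hMpos
  set p : ℝ := (K:ℝ) / Fintype.card (EE n) with hp
  have hp0 : 0 < p := by positivity
  have hp1 : p ≤ 1 := by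
    rw [hp, div_le_one hM]; exact_mod_cast hK
  have hn0 : 0 < n := by omega
  have hn' : (0:ℝ) < n := by exact_mod_cast hn0
  have hθ0 : 0 < θ := by linarith
  have hn1 : (1:ℝ) ≤ n := by exact_mod_cast hn0
  have hd : n * θ ^ (m+1) ≤ (n * p) ^ (m+1) := by
    rw [mul_pow, pow_succ, pow_succ (n:ℝ)]
    rw [pow_succ] at hθp
    nlinarith
  have hd1 : θ ≤ n * p := by
    refine le_of_pow_le_pow_left₀ (n := m+1) (by omega) (by positivity) (le_trans ?_ hd)
    exact le_mul_of_one_le_left (by positivity) hn1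
  have hd2 : n * θ ≤ (n * p) ^ k := by
    calc n * θ ≤ n * θ ^ (m+1) := by gcongr; exact le_self_pow₀ hθ (by omega)
      _ ≤ (n * p) ^ (m+1) := hd
      _ ≤ (n * p) ^ k := pow_le_pow_right₀ (hθ.trans hd1) hkm
  set q : ℝ := n * p / 16 with hq
  have hq0 : 0 < q := by positivity
  have hqK : q ≤ K / (4 * n) := by
    have hcard : (n:ℝ)^2 / 4 ≤ Fintype.card (EE n) := by
      rw [card_EE, Nat.cast_choose_two]
      have : (2:ℝ) ≤ n := by exact_mod_cast hn
      nlinarith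
    rw [hq, hp, div_le_div_iff₀ (by norm_num) (by positivity), mul_div_assoc', div_mul_eq_mul_div, div_le_iff₀ hM]
    have hKr : (0:ℝ) < K := by exact_mod_cast hK0
    nlinarith
  set b : ℝ := q ^ L / 2 with hb
  have hb0 : 0 < b := by positivity
  have hpt : ∀ g : Fin K → EE n, av (fun g2 : Fin (m+1) → Fin K → EE n =>
      ind (¬ HasMonoCopy (SimpleGraph.cycleGraph (m+1)) (hist π (List.ofFn g ++ l2 g2)))) ≤
      (ind (∑ e : EE n, ind (∃ i, g i = e) < (K : ℝ) / 4) + ind (b < ZZ hL g)) +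
        (4 / (b * (p / 2) ^ (m+1)) ^ 2) * YY hL m p g := by
    intro g
    have hY := YY_nonneg hL m p hp0.le g
    have hle1 : av (fun g2 : Fin (m+1) → Fin K → EE n =>
      ind (¬ HasMonoCopy (SimpleGraph.cycleGraph (m+1)) (hist π (List.ofFn g ++ l2 g2)))) ≤ 1 := by
      rw [← av_const (Ω := Fin (m+1) → Fin K → EE n) 1]
      exact av_mono (fun _ => ind_le_one _)
    have hYc : 0 ≤ (4 / (b * (p / 2) ^ (m+1)) ^ 2) * YY hL m p g := by positivity
    by_cases h1 : ∑ e : EE n, ind (∃ i, g i = e) < (K : ℝ) / 4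
    · rw [ind_true h1]
      have := ind_nonneg (b < ZZ hL g)
      linarith
    by_cases h2 : b < ZZ hL g
    · rw [ind_true h2]
      have := ind_nonneg (∑ e : EE n, ind (∃ i, g i = e) < (K : ℝ) / 4)
      linarith
    rw [ind_false h1, ind_false h2]
    push Not at h1 h2
    obtain ⟨c, C, hC, hCb⟩ := good hn0 hL ⟨k, by omega⟩ π g h1 q hq0.le hqK h2
    have := second hK0 hK hm hLm hL π g b p hb0 hp c C hC hCb l2 hl2
    rw [div_mul_eq_mul_div]
    linarith
  refine (av_mono hpt).trans ?_
  rw [av_add, av_add, av_mul_left]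
  have hA1 := distinct_low (E := EE n) K hK0 hK
  have hA2 : av (fun g : Fin K → EE n => ind (b < ZZ hL g)) ≤ (2 * 16 ^ L * c1) / θ := by
    refine (markov _ (fun g => Finset.sum_nonneg (fun _ _ => ind_nonneg _)) b hb0).trans ?_
    have : av (fun g : Fin K → EE n => ZZ hL g) ≤ ((n * p) ^ L / θ) * c1 := by
      refine le_trans ?_ (Zsum hn0 hL hk p θ hp0 hp1 hθ hd1 hd2)
      unfold ZZ
      rw [av_sum]
      exact Finset.sum_le_sum (fun x _ => av_cov _)
    rw [div_le_iff₀ hb0]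
    refine this.trans (le_of_eq ?_)
    rw [hb, hq, div_pow]
    field_simp
  have hA3 : av (fun g : Fin K → EE n => YY hL m p g) ≤
      ((n:ℝ) ^ (2 * L) * p ^ (2 * L + 2 * (m+1)) / θ) * c2 := by
    refine le_trans ?_ (Ysum hn0 hm hLm hL p θ hp0 hp1 hθ hθp)
    unfold YY
    rw [av_sum]
    apply Finset.sum_le_sum; intro x _
    rw [av_sum]
    apply Finset.sum_le_sum; intro x' _
    rw [av_mul_left, pow_add p (UU hL x x').card, mul_comm (p ^ (UU hL x x').card), ← mul_assoc]
    gcongr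
    · exact mul_nonneg (ind_nonneg _) (pow_nonneg hp0.le _)
    · exact av_cov _
  have hA4 : (4 / (b * (p / 2) ^ (m+1)) ^ 2) * (((n:ℝ) ^ (2 * L) * p ^ (2 * L + 2 * (m+1)) / θ) * c2) =
      (4 * c2 * (2 * 16 ^ L * 2 ^ (m+1)) ^ 2) / θ := by
    rw [hb, hq, div_pow, div_pow, mul_pow, show 2 * L + 2 * (m+1) = (L + (m+1)) * 2 by ring,
      show 2 * L = L * 2 by ring, pow_mul, pow_mul, pow_add p L, mul_pow (n:ℝ) p L]
    field_simp
    try ring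
  have hA5 := mul_le_mul_of_nonneg_left hA3 (show 0 ≤ 4 / (b * (p / 2) ^ (m+1)) ^ 2 by positivity)
  rw [hA4] at hA5
  rw [add_div]
  linarith

end Main

section Coupling

lemma ind_split (p q : Prop) : ind (p ∧ q) + ind (p ∧ ¬ q) = ind (p ∧ True) := by
  by_cases h1 : p <;> by_cases h2 : q <;> simp [ind, h1, h2]

lemma ncard_eq_cnt (n N : ℕ) (P : List (Sym2 (Fin n)) → Prop) :
    (Set.ncard {f : Fin N → Sym2 (Fin n) | ValidSeqFun f ∧ P (List.ofFn f)} : ℝ) =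
      cnt (E := EE n) (fun l => P (l.map Subtype.val)) N [] := by
  unfold cnt
  rw [sum_ind, ← Set.ncard_coe_finset]
  congr 1
  have hinj : Function.Injective (fun (f : Fin N → EE n) (i : Fin N) => (f i).1) := by
    intro f g h
    funext i
    exact Subtype.ext (congrFun h i)
  rw [← Set.ncard_image_of_injective _ hinj]
  congr 1
  ext f
  simp only [Set.mem_ofPred_eq, Set.mem_image, Finset.coe_filter, Finset.mem_univ, true_and,
    List.nil_append, List.nodup_ofFn, List.map_ofFn]
  constructor
  · rintro ⟨⟨h1, h2⟩, h3⟩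
    refine ⟨fun i => ⟨f i, h2 i⟩, ⟨?_, h3⟩, rfl⟩
    intro i j h
    exact h1 (congrArg Subtype.val h)
  · rintro ⟨g, ⟨h1, h2⟩, rfl⟩
    exact ⟨⟨fun i j h => h1 (Subtype.ext h), fun i => (g i).2⟩, h2⟩

lemma mono_copy_mono {α V : Type} {r : ℕ} (F : SimpleGraph α) {h h' : EdgeHistory V r} (hs : h ⊆ h')
    (hc : HasMonoCopy F h) : HasMonoCopy F h' := by
  obtain ⟨c, f, hf⟩ := hc
  refine ⟨c, f, fun u v huv => ?_⟩
  have := hf u v huv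
  rw [adj_colorGraph] at this ⊢
  exact ⟨hs this.1, this.2⟩

lemma online_low {α : Type} (F : SimpleGraph α) (n N j : ℕ) (hN : N ≤ Fintype.card (EE n)) (hj : j ≤ N)
    (hne : Nonempty (EE n)) (π : PainterStrategy (Fin n) 2) :
    1 - bav (E := EE n) (fun l => ¬ HasMonoCopy F (runPainter π (l.map Subtype.val))) j [] ≤
      onlineProb n N (OnlineMonoCopy F π) ∧ onlineProb n N (OnlineMonoCopy F π) ≤ 1 := by
  set P : List (Sym2 (Fin n)) → Prop := fun l => HasMonoCopy F (runPainter π l) with hP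
  have e1 := ncard_eq_cnt n N P
  have e2 := ncard_eq_cnt n N (fun _ => True)
  simp only [and_true] at e2
  have e3 := cnt_true (E := EE n) N [] List.nodup_nil
  have e4 := cnt_le_bav (E := EE n) (fun l => ¬ P (l.map Subtype.val)) (by
    intro l r h hl
    apply h
    refine mono_copy_mono F ?_ hl
    rw [List.map_append]
    unfold runPainter
    rw [run_append]
    exact (run_prefix _ _ _).subset) j N [] hj List.nodup_nil
  have e5 : cnt (E := EE n) (fun l => P (l.map Subtype.val)) N [] +
      cnt (E := EE n) (fun l => ¬ P (l.map Subtype.val)) N [] = cnt (E := EE n) (fun _ => True) N [] := by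
    unfold cnt
    rw [← Finset.sum_add_distrib]
    apply Finset.sum_congr rfl
    intro f _
    exact ind_split _ _
  have e6 : 0 ≤ cnt (E := EE n) (fun l => ¬ P (l.map Subtype.val)) N [] := by
    unfold cnt; exact Finset.sum_nonneg (fun _ _ => ind_nonneg _)
  set d : ℝ := ((Fintype.card (EE n) - ([] : List (EE n)).length).descFactorial N : ℝ) with hd
  have hdpos : 0 < d := by
    rw [hd]
    have : 0 < (Fintype.card (EE n) - ([] : List (EE n)).length).descFactorial N := by
      rw [Nat.pos_iff_ne_zero, Ne, Nat.descFactorial_eq_zero_iff_lt]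
      simpa using hN
    exact_mod_cast this
  have e7 : onlineProb n N (OnlineMonoCopy F π) = cnt (E := EE n) (fun l => P (l.map Subtype.val)) N [] / d := by
    unfold onlineProb
    rw [e2, e3, ← e1]
    rfl
  rw [e7, le_div_iff₀ hdpos, div_le_one hdpos]
  constructor
  · linarith
  · linarith

lemma bav_split (n K q : ℕ) (Q : List (EE n) → Prop) :
    bav Q (K + q * K) [] = av (fun g : Fin K → EE n => av (fun g2 : Fin q → Fin K → EE n =>
      ind (Q (dd [] (List.ofFn g ++ List.ofFn (fun i : Fin (q * K) => g2 (finProdFinEquiv.symm i).1 (finProdFinEquiv.symm i).2)))))) := by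
  have h1 : bav Q (K + q * K) [] = av (fun w : (Fin K → EE n) × (Fin (q * K) → EE n) =>
      ind (Q (dd [] (List.ofFn w.1 ++ List.ofFn w.2)))) := by
    unfold bav
    rw [← av_equiv (Fin.appendEquiv K (q * K))]
    congr 1
    funext w
    simp only [Fin.appendEquiv, Equiv.coe_fn_mk, List.ofFn_fin_append]
  rw [h1, av_prod]
  congr 1
  funext g
  rw [← av_equiv ((Equiv.curry (Fin q) (Fin K) (EE n)).symm.trans (Equiv.arrowCongr finProdFinEquiv (Equiv.refl _)))]
  rfl

lemma final_bound (m : ℕ) (hm : 2 ≤ m) : ∃ c : ℝ, 0 ≤ c ∧ ∀ (n N K : ℕ) (θ : ℝ), 2 ≤ n → 0 < K →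
    K + (m+1) * K ≤ N → N ≤ n.choose 2 → 1 ≤ θ →
    θ ^ (m+1) ≤ n ^ m * ((K:ℝ) / (n.choose 2 : ℕ)) ^ (m+1) →
    ∀ (π : PainterStrategy (Fin n) 2),
    1 - (c / θ + 8 / K) ≤ onlineProb n N (OnlineMonoCopy (SimpleGraph.cycleGraph (m+1)) π) ∧
      onlineProb n N (OnlineMonoCopy (SimpleGraph.cycleGraph (m+1)) π) ≤ 1 := by
  obtain ⟨c, hc, H⟩ := main_bound m hm
  refine ⟨c, hc, ?_⟩
  intro n N K θ hn hK0 hKN hN hθ hθp π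
  have hK : K ≤ Fintype.card (EE n) := by rw [card_EE]; nlinarith
  have hne : Nonempty (EE n) := Fintype.card_pos_iff.1 (by omega)
  have h1 := online_low (SimpleGraph.cycleGraph (m+1)) n N (K + (m+1) * K) (by rw [card_EE]; exact hN) hKN hne π
  refine ⟨le_trans ?_ h1.1, h1.2⟩
  rw [bav_split]
  have h2 := H n K θ hn hK0 hK hθ (by rw [card_EE]; exact hθp) π
    (fun g2 => List.ofFn (fun i : Fin ((m+1) * K) => g2 (finProdFinEquiv.symm i).1 (finProdFinEquiv.symm i).2)) (by
      intro g2 j i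
      rw [List.mem_ofFn]
      exact ⟨finProdFinEquiv (j, i), by simp⟩)
  unfold hist at h2
  linarith

end Coupling

/-- upper bound of Theorem 3. For every `ℓ ≥ 3` and `N(n)` with
`n^(1+1/ℓ) = o(N(n))` and `N(n) ≤ n(n-1)/2`, for every sequence of online Painter strategies
with 2 colors, a.a.s. the board after `N(n)` steps contains a monochromatic copy of `C_ℓ`. -/
theorem statement9 (ℓ : ℕ) (hℓ : 3 ≤ ℓ)
    (N : ℕ → ℕ)
    (hN : (fun n : ℕ => (n : ℝ) ^ ((1 : ℝ) + 1 / (ℓ : ℝ))) =o[atTop] (fun n : ℕ => (N n : ℝ)))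
    (hNle : ∀ n : ℕ, N n ≤ n * (n - 1) / 2)
    (π : (n : ℕ) → PainterStrategy (Fin n) 2) :
    Tendsto (fun n : ℕ =>
        onlineProb n (N n) (OnlineMonoCopy (SimpleGraph.cycleGraph ℓ) (π n)))
      atTop (nhds 1) := by
  obtain ⟨m, rfl⟩ : ∃ m, ℓ = m + 1 := ⟨ℓ - 1, by omega⟩
  have hm : 2 ≤ m := by omega
  obtain ⟨c, hc, H⟩ := final_bound m hm
  set r : ℕ → ℝ := fun n : ℕ => (n : ℝ) ^ ((1 : ℝ) + 1 / ((m + 1 : ℕ) : ℝ)) with hr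
  have hlim := hN.tendsto_div_nhds_zero
  have hlow : Tendsto (fun n : ℕ => 1 - (c * (m + 2) * (r n / N n) + 16 * (m + 2) * (1 / (n:ℝ)))) atTop (nhds 1) := by
    have h1 := (hlim.const_mul (c * (m + 2))).add
      ((tendsto_const_div_atTop_nhds_zero_nat (1:ℝ)).const_mul (16 * ((m:ℝ) + 2)))
    have h2 := h1.const_sub 1
    simpa using h2
  have hev : ∀ᶠ n : ℕ in atTop,
      1 - (c * (m + 2) * (r n / N n) + 16 * (m + 2) * (1 / (n:ℝ))) ≤
        onlineProb n (N n) (OnlineMonoCopy (SimpleGraph.cycleGraph (m+1)) (π n)) ∧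
      onlineProb n (N n) (OnlineMonoCopy (SimpleGraph.cycleGraph (m+1)) (π n)) ≤ 1 := by
    have h1 := hN.def (c := 1 / ((m:ℝ) + 2)) (by positivity)
    filter_upwards [h1, eventually_ge_atTop 2] with n hn1 hn2
    have hn0 : (0:ℝ) < n := by exact_mod_cast (by omega : 0 < n)
    have hnge : (1:ℝ) ≤ n := by exact_mod_cast (by omega : 1 ≤ n)
    have hrpos : 0 < r n := Real.rpow_pos_of_pos hn0 _
    have hrn : (n:ℝ) ≤ r n := by
      have := Real.rpow_le_rpow_of_exponent_le hnge (show (1:ℝ) ≤ (1 : ℝ) + 1 / ((m + 1 : ℕ) : ℝ) by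
        have : (0:ℝ) ≤ 1 / ((m + 1 : ℕ) : ℝ) := by positivity
        linarith)
      rwa [Real.rpow_one] at this
    have hrN : ((m:ℝ) + 2) * r n ≤ N n := by
      rw [Real.norm_of_nonneg (Nat.cast_nonneg _)] at hn1
      change ‖r n‖ ≤ _ at hn1
      rw [Real.norm_of_nonneg hrpos.le, div_mul_eq_mul_div, one_mul, le_div_iff₀ (by positivity)] at hn1
      linarith
    have hNn : ((m:ℝ) + 2) * n ≤ N n := le_trans (by gcongr) hrN
    have hNn' : (m + 2) * n ≤ N n := by exact_mod_cast hNn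
    have hNpos : (0:ℝ) < N n := lt_of_lt_of_le (by positivity) hrN
    obtain ⟨K, hK⟩ : ∃ K, K = N n / (m + 2) := ⟨_, rfl⟩
    have hK1 : n ≤ K := by
      rw [hK, Nat.le_div_iff_mul_le (by omega)]; linarith
    have hK2 : K * (m + 2) ≤ N n := by rw [hK]; exact Nat.div_mul_le_self _ _
    have hK3 : N n ≤ 2 * K * (m + 2) := by
      have := Nat.lt_div_mul_add (a := N n) (b := m + 2) (by omega)
      rw [← hK] at this
      nlinarith
    have hK3' : (N n : ℝ) ≤ 2 * K * (m + 2) := by exact_mod_cast hK3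
    have hKpos : (0:ℝ) < K := by exact_mod_cast (by omega : 0 < K)
    have hNc : N n ≤ n.choose 2 := by rw [Nat.choose_two_right]; exact hNle n
    have hrpow : r n ^ (m+1) = (n:ℝ) ^ (m + 2) := by
      simp only [hr]
      rw [← Real.rpow_natCast, ← Real.rpow_mul hn0.le, ← Real.rpow_natCast]
      congr 1
      push_cast
      field_simp
      ring
    have hchoose : ((n.choose 2 : ℕ) : ℝ) ≤ n ^ 2 / 2 := by
      rw [Nat.cast_choose_two]; nlinarith
    have hcpos : (0:ℝ) < ((n.choose 2 : ℕ) : ℝ) := by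
      exact_mod_cast Nat.choose_pos hn2
    set θ : ℝ := N n / ((m + 2) * r n) with hθ
    have hθ1 : 1 ≤ θ := by rw [hθ, one_le_div (by positivity)]; exact hrN
    have hθ2 : θ ≤ 2 * K / r n := by
      rw [hθ, div_le_div_iff₀ (by positivity) hrpos]
      nlinarith
    have hθ3 : θ ^ (m+1) ≤ n ^ m * ((K:ℝ) / (n.choose 2 : ℕ)) ^ (m+1) := by
      calc θ ^ (m+1) ≤ (2 * K / r n) ^ (m+1) := by gcongr
        _ = n ^ m * ((K:ℝ) / (n ^ 2 / 2)) ^ (m+1) := by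
            rw [div_pow, hrpow, div_pow, div_pow, mul_pow]
            field_simp
            try ring
        _ ≤ _ := by gcongr
    obtain ⟨hA, hB⟩ := H n (N n) K θ hn2 (by omega) (by nlinarith) hNc hθ1 hθ3 (π n)
    refine ⟨le_trans ?_ hA, hB⟩
    have e1 : c / θ = c * (m + 2) * (r n / N n) := by
      rw [hθ]; field_simp
    have e2 : 8 / (K:ℝ) ≤ 16 * (m + 2) * (1 / (n:ℝ)) := by
      have : (n:ℝ) ≤ K := by exact_mod_cast hK1
      rw [mul_one_div, div_le_div_iff₀ hKpos hn0]
      nlinarith [mul_nonneg (Nat.cast_nonneg (α := ℝ) m) hKpos.le]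
    rw [e1]
    linarith
  exact tendsto_of_tendsto_of_tendsto_of_le_of_le' hlow tendsto_const_nhds
    (hev.mono fun n h => h.1) (hev.mono fun n h => h.2)
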